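/- arXiv:1003.4122 — 3 statements merged into one kernel-verified Lean document; each statement's English description precedes it below -/
import Mathlib

section
/- Let A ⊆ ℝ² be a regular compact set whose interior has at most two connected components. If g_A = g_K for some convex body K in ℝ², then A is convex. -/
open MeasureTheory Topology Filter Set

/-- The covariogram of a set `A ⊆ ℝ²`: `g_A(x) = λ₂(A ∩ (A + x))`. -/
noncomputable def covariogram (A : Set (EuclideanSpace ℝ (Fin 2)))
    (x : EuclideanSpace ℝ (Fin 2)) : ℝ :=
  (volume (A ∩ ((· + x) '' A))).toReal

/-- A measurable set of reals which misses `[c - ε, c)` and contains `[s, s + ε)`, `c ≤ s`, leaves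
at least length `ε` uncovered in `[c, s + ε)` when translated by `ε`. -/
lemma ofReal_le_volume_diff_translate {B : Set ℝ} (hB : MeasurableSet B) {c s ε : ℝ}
    (hε : 0 < ε) (hcs : c ≤ s) (hgap : ∀ r ∈ Ico (c - ε) c, r ∉ B)
    (hfull : Ico s (s + ε) ⊆ B) :
    ENNReal.ofReal ε ≤ volume ((B \ {r | r - ε ∈ B}) ∩ Ico c (s + ε)) := by
  have hsub : B ∩ Ico c (s + ε) ⊆
      ((B \ {r | r - ε ∈ B}) ∩ Ico c (s + ε)) ∪ (fun r => r + -ε) ⁻¹' (B ∩ Ico c s) := by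
    rintro r ⟨hrB, hr⟩
    by_cases h : r - ε ∈ B
    · refine Or.inr ⟨h, ?_, by have := hr.2; linarith⟩
      by_contra hlt
      exact hgap (r - ε) ⟨by linarith [hr.1], by linarith⟩ h
    · exact Or.inl ⟨⟨hrB, h⟩, hr⟩
  have hle := (measure_mono hsub).trans (measure_union_le (μ := volume) _ _)
  rw [measure_preimage_add_right] at hle
  have hsplit : B ∩ Ico c (s + ε) = Ico s (s + ε) ∪ B ∩ Ico c s := by
    rw [← Ico_union_Ico_eq_Ico hcs (by linarith : s ≤ s + ε), inter_union_distrib_left,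
      inter_eq_right.2 hfull, union_comm]
  have hdisj : Disjoint (Ico s (s + ε)) (B ∩ Ico c s) :=
    Set.disjoint_left.2 fun r h h' => absurd h'.2.2 (not_lt.2 h.1)
  have hfin : volume (B ∩ Ico c s) ≠ ⊤ :=
    ((measure_mono inter_subset_right).trans_lt measure_Ico_lt_top).ne
  rw [hsplit, measure_union hdisj (hB.inter measurableSet_Ico), Real.volume_Ico,
    add_sub_cancel_left] at hle
  exact (ENNReal.add_le_add_iff_right hfin).1 hle

lemma volume_diff_translate_le_of_ordConnected {J : Set ℝ} (hJ : J.OrdConnected) {ε : ℝ}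
    (hε : 0 < ε) : volume (J \ {r | r - ε ∈ J}) ≤ ENNReal.ofReal ε := by
  have key : ∀ r ∈ J \ {r | r - ε ∈ J}, ∀ r' ∈ J \ {r | r - ε ∈ J}, r' - r ≤ ε := by
    intro r hr r' hr'
    by_contra! h
    exact hr'.2 (hJ.out hr.1 hr'.1 ⟨by linarith, by linarith⟩)
  refine (Real.volume_le_diam _).trans (Metric.ediam_le fun r hr r' hr' => ?_)
  rw [edist_dist, Real.dist_eq]
  exact ENNReal.ofReal_le_ofReal
    (abs_le.2 ⟨by linarith [key r hr r' hr'], by linarith [key r' hr' r hr]⟩)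

lemma measurableSet_diff_vertical_translate {A : Set (ℝ × ℝ)} (hA : MeasurableSet A) (ε : ℝ) :
    MeasurableSet (A \ {z | z - (0, ε) ∈ A}) :=
  hA.diff (hA.preimage (measurable_id.sub_const ((0 : ℝ), ε)))

lemma mk_preimage_diff_vertical_translate (A : Set (ℝ × ℝ)) (ε t : ℝ) :
    Prod.mk t ⁻¹' (A \ {z | z - (0, ε) ∈ A}) =
      (Prod.mk t ⁻¹' A) \ {r | r - ε ∈ Prod.mk t ⁻¹' A} := by
  ext r
  simp

lemma volume_diff_vertical_translate_le {K : Set (ℝ × ℝ)} (hK : IsCompact K)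
    (hKc : Convex ℝ K) {ε : ℝ} (hε : 0 < ε) :
    volume (K \ {z | z - (0, ε) ∈ K}) ≤ ENNReal.ofReal ε * volume (Prod.fst '' K) := by
  have hmeas : MeasurableSet (Prod.fst '' K) := (hK.image continuous_fst).measurableSet
  rw [Measure.volume_eq_prod,
    Measure.prod_apply (measurableSet_diff_vertical_translate hK.measurableSet ε),
    ← lintegral_indicator_const hmeas]
  refine lintegral_mono fun t => ?_
  rw [mk_preimage_diff_vertical_translate]
  by_cases ht : t ∈ Prod.fst '' K
  · rw [indicator_of_mem ht]
    refine volume_diff_translate_le_of_ordConnected (Convex.ordConnected ?_) hε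
    intro r hr r' hr' a b ha hb hab
    have := hKc hr hr' ha hb hab
    simpa [← add_mul, hab] using this
  · have : Prod.mk t ⁻¹' K = ∅ :=
      eq_empty_of_forall_notMem fun r hr => ht ⟨(t, r), hr, rfl⟩
    simp [this]

lemma exists_Icc_subset_preimage_of_mem_interior {A : Set (ℝ × ℝ)} {z : ℝ × ℝ}
    (hz : z ∈ interior A) :
    ∃ δ > 0, Icc (z.1 - δ) (z.1 + δ) ×ˢ Icc (z.2 - δ) (z.2 + δ) ⊆ A := by
  obtain ⟨δ, hδ, h⟩ := Metric.nhds_basis_closedBall.mem_iff.1 (mem_interior_iff_mem_nhds.1 hz)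
  refine ⟨δ, hδ, ?_⟩
  rwa [← Real.closedBall_eq_Icc, ← Real.closedBall_eq_Icc, closedBall_prod_same]

lemma ofReal_le_volume_diff_translate_of_Icc_subset {B : Set ℝ} (hB : IsCompact B) {p δ ε : ℝ}
    (hε : 0 < ε) (hεδ : ε ≤ δ) (hp : Icc (p - δ) (p + δ) ⊆ B) :
    ENNReal.ofReal ε ≤ volume (B \ {r | r - ε ∈ B}) := by
  obtain ⟨c, hc⟩ := hB.bddBelow
  have hcp : c ≤ p := hc (hp (a := p) ⟨by linarith, by linarith⟩)
  exact (ofReal_le_volume_diff_translate hB.measurableSet hε hcp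
    (fun r hr hrB => absurd (hc hrB) (not_le.2 hr.2))
    (fun r hr => hp ⟨by linarith [hr.1], by linarith [hr.2]⟩)).trans
    (measure_mono inter_subset_left)

lemma two_mul_ofReal_le_volume_diff_translate {B : Set ℝ} (hB : IsCompact B) {p z q δ ε : ℝ}
    (hε : 0 < ε) (hεδ : ε ≤ δ) (hpz : p ≤ z) (hzq : z ≤ q) (hp : Icc (p - δ) (p + δ) ⊆ B)
    (hz : Icc (z - δ) (z + δ) ⊆ Bᶜ) (hq : Icc (q - δ) (q + δ) ⊆ B) :
    2 * ENNReal.ofReal ε ≤ volume (B \ {r | r - ε ∈ B}) := by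
  obtain ⟨c, hc⟩ := hB.bddBelow
  have hcp : c ≤ p := hc (hp (a := p) ⟨by linarith, by linarith⟩)
  have hpεz : p + ε ≤ z := by
    by_contra! h
    exact hz (a := z) ⟨by linarith, by linarith⟩ (hp (a := z) ⟨by linarith, by linarith⟩)
  have h₁ := ofReal_le_volume_diff_translate hB.measurableSet hε hcp
    (fun r hr hrB => absurd (hc hrB) (not_le.2 hr.2))
    (fun r hr => hp ⟨by linarith [hr.1], by linarith [hr.2]⟩)
  have h₂ := ofReal_le_volume_diff_translate hB.measurableSet hε hzq
    (fun r hr => hz ⟨by linarith [hr.1], by linarith [hr.2]⟩)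
    (fun r hr => hq ⟨by linarith [hr.1], by linarith [hr.2]⟩)
  have hmeas : MeasurableSet (B \ {r | r - ε ∈ B}) :=
    hB.measurableSet.diff (hB.measurableSet.preimage (measurable_id.sub_const ε))
  have hdisj : Disjoint ((B \ {r | r - ε ∈ B}) ∩ Ico c (p + ε))
      ((B \ {r | r - ε ∈ B}) ∩ Ico z (q + ε)) :=
    Set.disjoint_left.2 fun r h h' => absurd h'.2.1 (not_le.2 (h.2.2.trans_le hpεz))
  calc 2 * ENNReal.ofReal ε = ENNReal.ofReal ε + ENNReal.ofReal ε := two_mul _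
    _ ≤ _ := add_le_add h₁ h₂
    _ = _ := (measure_union hdisj (hmeas.inter measurableSet_Ico)).symm
    _ ≤ _ := measure_mono (union_subset inter_subset_left inter_subset_left)

/-- If a vertical segment joining two interior points of `A` is not contained in `A`, then
the lines close to it are cut by `A` into at least two pieces. This makes the loss of area
under small vertical translations larger than the length of the shadow of `A`. -/
lemma segment_subset_of_fst_eq {A K : Set (ℝ × ℝ)} (hA : IsCompact A) (hK : IsCompact K)
    (hKc : Convex ℝ K) (hKA : volume (Prod.fst '' K) ≤ volume (Prod.fst '' interior A))
    (hvol : ∀ w, volume (A \ {z | z - w ∈ A}) = volume (K \ {z | z - w ∈ K}))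
    {x y : ℝ × ℝ} (hx : x ∈ interior A) (hy : y ∈ interior A) (hxy : x.1 = y.1) :
    segment ℝ x y ⊆ A := by
  wlog hle : x.2 ≤ y.2 generalizing x y
  · rw [segment_symm]
    exact this hy hx hxy.symm (le_of_not_ge hle)
  rintro ⟨z₁, z₂⟩ hz
  by_contra hzA
  obtain ⟨hz₁, hz₂⟩ : z₁ = x.1 ∧ z₂ ∈ Icc x.2 y.2 := by
    have h := (convex_Icc (𝕜 := ℝ) x y).segment_subset (left_mem_Icc.2 ⟨hxy.le, hle⟩)
      (right_mem_Icc.2 ⟨hxy.le, hle⟩) hz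
    exact ⟨le_antisymm (h.2.1.trans hxy.ge) h.1.1, h.1.2, h.2.2⟩
  obtain ⟨δ₁, hδ₁, h₁⟩ := exists_Icc_subset_preimage_of_mem_interior hx
  obtain ⟨δ₂, hδ₂, h₂⟩ := exists_Icc_subset_preimage_of_mem_interior hy
  obtain ⟨δ₃, hδ₃, h₃⟩ := exists_Icc_subset_preimage_of_mem_interior (A := Aᶜ) (z := (z₁, z₂))
    (by rwa [hA.isClosed.isOpen_compl.interior_eq])
  obtain ⟨δ, hδ, hδ'⟩ : ∃ δ > 0, δ ≤ δ₁ ∧ δ ≤ δ₂ ∧ δ ≤ δ₃ :=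
    ⟨min δ₁ (min δ₂ δ₃), by positivity, by simp, by simp, by simp⟩
  obtain ⟨hd₁, hd₂, hd₃⟩ := hδ'
  set P : Set ℝ := Prod.fst '' interior A with hP
  set I : Set ℝ := Icc (x.1 - δ) (x.1 + δ) with hI
  have hsec : ∀ t, IsCompact (Prod.mk t ⁻¹' A) := fun t =>
    (hA.image continuous_snd).of_isClosed_subset (hA.isClosed.preimage (by fun_prop))
      fun r hr => ⟨_, hr, rfl⟩
  have hIsec : ∀ t ∈ I, Icc (x.2 - δ) (x.2 + δ) ⊆ Prod.mk t ⁻¹' A ∧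
      Icc (z₂ - δ) (z₂ + δ) ⊆ (Prod.mk t ⁻¹' A)ᶜ ∧
      Icc (y.2 - δ) (y.2 + δ) ⊆ Prod.mk t ⁻¹' A := by
    intro t ht
    have ht' : x.1 - δ ≤ t ∧ t ≤ x.1 + δ := ht
    refine ⟨fun r hr => h₁ ⟨⟨?_, ?_⟩, ?_, ?_⟩, fun r hr => h₃ ⟨⟨?_, ?_⟩, ?_, ?_⟩,
      fun r hr => h₂ ⟨⟨?_, ?_⟩, ?_, ?_⟩⟩ <;> dsimp only <;> linarith [hr.1, hr.2]
  let e : ℕ → ℝ := fun n => 1 / ((n : ℝ) + 1)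
  have he : ∀ n, 0 < e n := fun n => by positivity
  have he0 : ∀ n, ENNReal.ofReal (e n) ≠ 0 := fun n => by simpa using he n
  have hlim : ∀ d > 0, ∀ᶠ n in atTop, e n ≤ d := fun d hd =>
    (tendsto_one_div_add_atTop_nhds_zero_nat (𝕜 := ℝ)).eventually (eventually_le_nhds hd)
  let f : ℕ → ℝ → ENNReal := fun n t =>
    volume (Prod.mk t ⁻¹' (A \ {z | z - (0, e n) ∈ A})) / ENNReal.ofReal (e n)
  have hfm : ∀ n, Measurable (f n) := fun n =>
    (measurable_measure_prodMk_left
      (measurableSet_diff_vertical_translate hA.measurableSet _)).div_const _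
  have hfint : ∀ n, ∫⁻ t, f n t ≤ volume (Prod.fst '' K) := by
    intro n
    simp only [f, div_eq_mul_inv]
    rw [lintegral_mul_const _ (measurable_measure_prodMk_left
      (measurableSet_diff_vertical_translate hA.measurableSet _)),
      ← Measure.prod_apply (measurableSet_diff_vertical_translate hA.measurableSet _),
      ← Measure.volume_eq_prod, hvol, ← div_eq_mul_inv]
    refine ENNReal.div_le_of_le_mul ?_
    rw [mul_comm]
    exact volume_diff_vertical_translate_le hK hKc (he n)
  have hlow : ∀ t, P.indicator (fun _ => (1 : ENNReal)) t + I.indicator (fun _ => 1) t ≤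
      liminf (fun n => f n t) atTop := by
    intro t
    by_cases htI : t ∈ I
    · have : P.indicator (fun _ => (1 : ENNReal)) t + I.indicator (fun _ => 1) t ≤ 2 := by
        rw [← one_add_one_eq_two]
        exact add_le_add (indicator_le_self' (by simp) t) (indicator_le_self' (by simp) t)
      refine this.trans (le_liminf_of_le (by isBoundedDefault) ?_)
      filter_upwards [hlim δ hδ] with n hn
      rw [ENNReal.le_div_iff_mul_le (Or.inl (he0 n)) (Or.inl ENNReal.ofReal_ne_top),
        mk_preimage_diff_vertical_translate]
      obtain ⟨hp, hz, hq⟩ := hIsec t htI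
      exact two_mul_ofReal_le_volume_diff_translate (hsec t) (he n) hn hz₂.1 hz₂.2 hp hz hq
    · rw [indicator_of_notMem htI, add_zero]
      by_cases htP : t ∈ P
      · rw [indicator_of_mem htP]
        obtain ⟨p, hp, rfl⟩ := htP
        obtain ⟨d, hd, hdA⟩ := exists_Icc_subset_preimage_of_mem_interior hp
        refine le_liminf_of_le (by isBoundedDefault) ?_
        filter_upwards [hlim d hd] with n hn
        rw [ENNReal.le_div_iff_mul_le (Or.inl (he0 n)) (Or.inl ENNReal.ofReal_ne_top),
          mk_preimage_diff_vertical_translate, one_mul]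
        exact ofReal_le_volume_diff_translate_of_Icc_subset (hsec _) (he n) hn
          fun r hr => hdA ⟨⟨by linarith, by linarith⟩, hr⟩
      · simp [indicator_of_notMem htP]
  have hPopen : IsOpen P := isOpenMap_fst _ isOpen_interior
  have hmain : volume P + volume I ≤ volume (Prod.fst '' K) := by
    calc volume P + volume I
        = ∫⁻ t, P.indicator (fun _ => (1 : ENNReal)) t + I.indicator (fun _ => 1) t := by
          rw [lintegral_add_left (measurable_const.indicator hPopen.measurableSet),
            lintegral_indicator_const hPopen.measurableSet,
            lintegral_indicator_const measurableSet_Icc, one_mul, one_mul]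
      _ ≤ ∫⁻ t, liminf (fun n => f n t) atTop := lintegral_mono hlow
      _ ≤ liminf (fun n => ∫⁻ t, f n t) atTop := lintegral_liminf_le hfm
      _ ≤ volume (Prod.fst '' K) :=
          liminf_le_of_frequently_le' (Eventually.of_forall hfint).frequently
  have hPfin : volume P ≠ ⊤ := ((measure_mono (image_mono interior_subset)).trans_lt
    (hA.image continuous_fst).measure_lt_top).ne
  have hI0 : volume I ≤ 0 := by
    refine (ENNReal.add_le_add_iff_left hPfin).1 ?_
    rw [add_zero]
    exact hmain.trans hKA
  rw [hI, Real.volume_Icc, nonpos_iff_eq_zero, ENNReal.ofReal_eq_zero] at hI0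
  linarith

lemma exists_measurePreserving_equiv_fst_eq {x y : EuclideanSpace ℝ (Fin 2)} (hxy : x ≠ y) :
    ∃ e : EuclideanSpace ℝ (Fin 2) ≃L[ℝ] ℝ × ℝ, MeasurePreserving e ∧ (e x).1 = (e y).1 := by
  have hw : ‖y - x‖ ≠ 0 := norm_ne_zero_iff.2 (sub_ne_zero.2 hxy.symm)
  have hon : Orthonormal ℝ (({1} : Set (Fin 2)).domRestrict fun _ => ‖y - x‖⁻¹ • (y - x)) := by
    refine ⟨fun _ => ?_, fun i j hij => absurd (Subsingleton.elim i j) hij⟩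
    simp [norm_smul, hw]
  obtain ⟨b, hb⟩ := hon.exists_orthonormalBasis_extension_of_card_eq (by simp)
  refine ⟨(b.repr.toContinuousLinearEquiv.trans (EuclideanSpace.equiv (Fin 2) ℝ)).trans
    (ContinuousLinearEquiv.finTwoArrow ℝ ℝ), ?_, ?_⟩
  · exact (volume_preserving_finTwoArrow ℝ).comp
      ((PiLp.volume_preserving_ofLp (Fin 2)).comp b.measurePreserving_repr)
  · have h01 : inner ℝ (b 0) (y - x) = 0 := by
      have h : inner ℝ (b 0) (b 1) = 0 := b.orthonormal.2 (by decide)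
      rw [hb 1 rfl, inner_smul_right] at h
      exact (mul_eq_zero.1 h).resolve_left (inv_ne_zero hw)
    rw [inner_sub_right, sub_eq_zero] at h01
    change b.repr x 0 = b.repr y 0
    rw [b.repr_apply_apply, b.repr_apply_apply, h01]

lemma image_add_right_eq_setOf {E : Type*} [AddGroup E] (A : Set E) (w : E) :
    (· + w) '' A = {z | z - w ∈ A} := by
  ext z
  simp [sub_eq_add_neg]

lemma volume_diff_translate_eq_of_covariogram_eq {A K : Set (EuclideanSpace ℝ (Fin 2))}
    (hA : IsCompact A) (hK : IsCompact K) (hg : covariogram A = covariogram K)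
    (w : EuclideanSpace ℝ (Fin 2)) :
    volume (A \ {z | z - w ∈ A}) = volume (K \ {z | z - w ∈ K}) := by
  have key : ∀ {B : Set (EuclideanSpace ℝ (Fin 2))}, IsCompact B →
      volume (B \ {z | z - w ∈ B}) =
        ENNReal.ofReal (covariogram B 0) - ENNReal.ofReal (covariogram B w) := by
    intro B hB
    have hfin : ∀ s, volume (B ∩ s) ≠ ⊤ := fun s =>
      ((measure_mono inter_subset_left).trans_lt hB.measure_lt_top).ne
    have hm : MeasurableSet {z | z - w ∈ B} :=
      hB.measurableSet.preimage (measurable_id.sub_const w)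
    simp only [covariogram, image_add_right_eq_setOf, sub_zero, ofPred_mem_eq, inter_self]
    rw [ENNReal.ofReal_toReal hB.measure_lt_top.ne, ENNReal.ofReal_toReal (hfin _),
      ← measure_sdiff inter_subset_left (hB.measurableSet.inter hm).nullMeasurableSet (hfin _),
      sdiff_self_inter]
  rw [key hA, key hK, hg]

lemma sub_mem_sub_of_covariogram_eq {A K : Set (EuclideanSpace ℝ (Fin 2))}
    (hA : IsCompact A) (hK : IsCompact K) (hKreg : K ⊆ closure (interior K))
    (hg : covariogram A = covariogram K) :
    ∀ k ∈ K, ∀ l ∈ K, ∃ a ∈ A, ∃ b ∈ A, a - b = k - l := by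
  have hclosed : IsClosed ((fun p : _ × _ => p.1 - p.2) '' (A ×ˢ A)) :=
    ((hA.prod hA).image (by fun_prop)).isClosed
  have h_int : ∀ k ∈ interior K, ∀ l ∈ interior K,
      k - l ∈ (fun p : _ × _ => p.1 - p.2) '' (A ×ˢ A) := by
    intro k hk l hl
    have hopen : IsOpen (interior K ∩ {z | z - (k - l) ∈ interior K}) :=
      isOpen_interior.inter (isOpen_interior.preimage (by fun_prop))
    have hpos : 0 < volume (K ∩ {z | z - (k - l) ∈ K}) :=
      (hopen.measure_pos volume ⟨k, hk, by simpa using hl⟩).trans_le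
        (measure_mono (inter_subset_inter interior_subset fun z hz =>
          interior_subset (s := K) hz))
    have hne : covariogram A (k - l) ≠ 0 := by
      rw [hg, covariogram, image_add_right_eq_setOf]
      exact (ENNReal.toReal_pos hpos.ne'
        ((measure_mono inter_subset_left).trans_lt hK.measure_lt_top).ne).ne'
    obtain ⟨z, hz, hz'⟩ : (A ∩ ((· + (k - l)) '' A)).Nonempty := by
      by_contra h
      exact hne (by rw [covariogram, not_nonempty_iff_eq_empty.1 h, measure_empty,
        ENNReal.toReal_zero])
    rw [image_add_right_eq_setOf] at hz'
    exact ⟨(z, z - (k - l)), ⟨hz, hz'⟩, by simp⟩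
  intro k hk l hl
  obtain ⟨⟨a, b⟩, ⟨ha, hb⟩, hab⟩ := hclosed.closure_subset
    (map_mem_closure₂ (f := fun p q => p - q) (by fun_prop) (hKreg hk) (hKreg hl) h_int)
  exact ⟨a, ha, b, hb, hab⟩

lemma volume_image_le_of_sub_mem_sub {E : Type*} [AddCommGroup E] [Module ℝ E]
    [TopologicalSpace E] {A K : Set E} (hK : IsCompact K)
    (hKA : ∀ k ∈ K, ∀ l ∈ K, ∃ a ∈ A, ∃ b ∈ A, a - b = k - l) (f : E →L[ℝ] ℝ)
    (hf : IsPreconnected (f '' A)) : volume (f '' K) ≤ volume (f '' A) := by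
  rcases K.eq_empty_or_nonempty with rfl | hne
  · simp
  obtain ⟨k, hk, hkmax⟩ := hK.exists_isMaxOn hne f.continuous.continuousOn
  obtain ⟨l, hl, hlmin⟩ := hK.exists_isMinOn hne f.continuous.continuousOn
  obtain ⟨a, ha, b, hb, hab⟩ := hKA k hk l hl
  have hsub : f '' K ⊆ Icc (f l) (f k) := by
    rintro _ ⟨z, hz, rfl⟩
    exact ⟨hlmin hz, hkmax hz⟩
  calc volume (f '' K) ≤ volume (Icc (f l) (f k)) := measure_mono hsub
    _ = volume (Icc (f b) (f a)) := by
      rw [Real.volume_Icc, Real.volume_Icc, ← map_sub, ← map_sub, hab]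
    _ ≤ volume (f '' A) :=
      measure_mono (hf.ordConnected.out (mem_image_of_mem f hb) (mem_image_of_mem f ha))

lemma volume_image_closure_union_le {E : Type*} [TopologicalSpace E] {U V : Set E}
    (hU : IsPreconnected U) (hV : IsPreconnected V) {f : E → ℝ} (hf : Continuous f) :
    volume (f '' (closure U ∪ closure V)) ≤ volume (f '' (U ∪ V)) := by
  have hfr : ∀ {W : Set E}, IsPreconnected W → volume (frontier (f '' W)) = 0 := fun hW =>
    ((hW.image f hf.continuousOn).ordConnected.convex (𝕜 := ℝ)).addHaar_frontier volume
  have hcl : ∀ W : Set E, f '' closure W ⊆ f '' W ∪ frontier (f '' W) := fun W => by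
    rw [← closure_eq_self_union_frontier]
    exact image_closure_subset_closure_image hf
  have hsub : f '' (closure U ∪ closure V) ⊆
      f '' (U ∪ V) ∪ (frontier (f '' U) ∪ frontier (f '' V)) := by
    rw [image_union, image_union]
    exact (union_subset_union (hcl U) (hcl V)).trans_eq (union_union_union_comm _ _ _ _)
  refine (measure_mono hsub).trans ((measure_union_le _ _).trans ?_)
  rw [measure_union_null (hfr hU) (hfr hV), add_zero]

lemma segment_subset_of_covariogram_eq {A K : Set (EuclideanSpace ℝ (Fin 2))}
    (hA : IsCompact A) (hK : IsCompact K) (hKc : Convex ℝ K)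
    (hg : covariogram A = covariogram K) {x y : EuclideanSpace ℝ (Fin 2)}
    (hx : x ∈ interior A) (hy : y ∈ interior A)
    (hKA : ∀ f : EuclideanSpace ℝ (Fin 2) →L[ℝ] ℝ, f x = f y →
      volume (f '' K) ≤ volume (f '' interior A)) :
    segment ℝ x y ⊆ A := by
  rcases eq_or_ne x y with rfl | hxy
  · simpa using interior_subset hx
  obtain ⟨e, he, hexy⟩ := exists_measurePreserving_equiv_fst_eq hxy
  have h_int : interior (e '' A) = e '' interior A := (e.toHomeomorph.image_interior A).symm
  have hfst : ∀ B, Prod.fst '' (e '' B) = ((ContinuousLinearMap.fst ℝ ℝ ℝ).comp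
      (e : EuclideanSpace ℝ (Fin 2) →L[ℝ] ℝ × ℝ)) '' B := fun B => by
    rw [image_image]
    rfl
  have hvol : ∀ {B : Set (EuclideanSpace ℝ (Fin 2))}, IsCompact B → ∀ w,
      volume (e '' B \ {z | z - w ∈ e '' B}) = volume (B \ {z | z - e.symm w ∈ B}) := by
    intro B hB w
    have hm : MeasurableSet (e '' B \ {z | z - w ∈ e '' B}) :=
      have h := (hB.image e.continuous).measurableSet
      h.diff (h.preimage (measurable_id.sub_const w))
    rw [← he.measure_preimage hm.nullMeasurableSet]
    congr 1
    ext z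
    simp [e.image_eq_preimage_symm]
  have hseg := segment_subset_of_fst_eq (hA.image e.continuous) (hK.image e.continuous)
    (hKc.linear_image (e : EuclideanSpace ℝ (Fin 2) →ₗ[ℝ] ℝ × ℝ))
    (by rw [h_int, hfst, hfst]; exact hKA _ hexy)
    (fun w => by
      rw [hvol hA, hvol hK, volume_diff_translate_eq_of_covariogram_eq hA hK hg])
    (h_int ▸ mem_image_of_mem e hx) (h_int ▸ mem_image_of_mem e hy) hexy
  rw [← image_subset_image_iff e.injective]
  exact (image_segment ℝ (e : EuclideanSpace ℝ (Fin 2) →ₗ[ℝ] ℝ × ℝ).toAffineMap x y).subset.trans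
    hseg

/-- If `A ⊆ ℝ²` is a regular compact set whose interior has at most two connected
components, and `g_A = g_K` for some convex body `K`, then `A` is convex. -/
theorem covariogram_convex_of_two_components (A : Set (EuclideanSpace ℝ (Fin 2)))
    (hA : IsCompact A) (hreg : A = closure (interior A))
    (hcomp : ∃ x y : EuclideanSpace ℝ (Fin 2),
      interior A ⊆ connectedComponentIn (interior A) x ∪ connectedComponentIn (interior A) y)
    (hK : ∃ K : Set (EuclideanSpace ℝ (Fin 2)), IsCompact K ∧ Convex ℝ K ∧
      (interior K).Nonempty ∧ covariogram A = covariogram K) :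
    Convex ℝ A := by
  obtain ⟨K, hK, hKc, hKi, hg⟩ := hK
  obtain ⟨p, q, hpq⟩ := hcomp
  set U := connectedComponentIn (interior A) p
  set V := connectedComponentIn (interior A) q
  have hU : IsPreconnected U := isPreconnected_connectedComponentIn
  have hV : IsPreconnected V := isPreconnected_connectedComponentIn
  have hUA : U ⊆ interior A := connectedComponentIn_subset _ _
  have hVA : V ⊆ interior A := connectedComponentIn_subset _ _
  have hUV : interior A = U ∪ V := hpq.antisymm (union_subset hUA hVA)
  have hAUV : A = closure U ∪ closure V := by
    rw [← closure_union, ← hUV]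
    exact hreg
  have hKA := sub_mem_sub_of_covariogram_eq hA hK
    (hKc.closure_interior_eq_closure_of_nonempty_interior hKi ▸ subset_closure) hg
  have hseg : ∀ x ∈ interior A, ∀ y ∈ interior A,
      (∀ f : EuclideanSpace ℝ (Fin 2) →L[ℝ] ℝ, f x = f y → IsPreconnected (f '' A)) →
      segment ℝ x y ⊆ A := by
    intro x hx y hy hconn
    refine segment_subset_of_covariogram_eq hA hK hKc hg hx hy fun f hf => ?_
    refine (volume_image_le_of_sub_mem_sub hK hKA f (hconn f hf)).trans ?_
    have h := volume_image_closure_union_le hU hV f.continuous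
    rwa [← hAUV, ← hUV] at h
  have hconn : IsPreconnected A := by
    rcases U.eq_empty_or_nonempty with hU0 | ⟨x, hx⟩
    · rw [hAUV, hU0, closure_empty, empty_union]
      exact hV.closure
    rcases V.eq_empty_or_nonempty with hV0 | ⟨y, hy⟩
    · rw [hAUV, hV0, closure_empty, union_empty]
      exact hU.closure
    have hxy : segment ℝ x y ⊆ A := hseg x (hUA hx) y (hVA hy) fun f hf => by
      rw [hAUV, image_union]
      exact (hU.closure.image f f.continuous.continuousOn).union (f x)
        (mem_image_of_mem f (subset_closure hx)) (hf ▸ mem_image_of_mem f (subset_closure hy))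
        (hV.closure.image f f.continuous.continuousOn)
    have h : A = (closure U ∪ segment ℝ x y) ∪ closure V := by
      rw [union_right_comm, ← hAUV, union_eq_left.2 hxy]
    rw [h]
    exact (hU.closure.union x (subset_closure hx) (left_mem_segment ℝ x y)
      (convex_segment x y).isPreconnected).union y (Or.inr (right_mem_segment ℝ x y))
      (subset_closure hy) hV.closure
  intro x hx y hy a b ha hb hab
  rw [hreg] at hx hy
  refine hA.isClosed.closure_subset
    (map_mem_closure₂ (f := fun x y => a • x + b • y) (by fun_prop) hx hy fun x hx y hy => ?_)
  exact hseg x hx y hy (fun f _ => hconn.image f f.continuous.continuousOn)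
    ⟨a, b, ha, hb, hab, rfl⟩
end

section
/- Let A ⊆ ℝ² be a compact set that is regular (equal to the closure of its interior) and whose topological boundary is the union of finitely many closed nondegenerate line segments (so that ∂A consists of finitely many disjoint simple closed polygonal curves, each with finitely many edges). If g_A = g_K for some convex body K in ℝ², then A is convex. -/
open MeasureTheory Topology Filter Set

namespace PlanarCovariogram

/-- The horizontal slice of a planar set at height `s`. -/
def slice (A : Set (ℝ × ℝ)) (s : ℝ) : Set ℝ := {r | (r, s) ∈ A}

/-- The length of the horizontal slice of a planar set at height `s`. -/
noncomputable def len (A : Set (ℝ × ℝ)) (s : ℝ) : ℝ := volume.real (slice A s)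

/-- The covariogram in coordinates. -/
noncomputable def cov (A : Set (ℝ × ℝ)) (x : ℝ × ℝ) : ℝ := volume.real {y | y ∈ A ∧ y + x ∈ A}

/-- The real-valued indicator function of a planar set. -/
noncomputable def ind (A : Set (ℝ × ℝ)) (x : ℝ × ℝ) : ℝ := A.indicator 1 x

/-- The product of two vertical differences of the indicator function. -/
noncomputable def corner (A : Set (ℝ × ℝ)) (h r : ℝ) (x : ℝ × ℝ) : ℝ :=
  (ind A x - ind A (x + (0, h))) * (ind A (x + (r, 0)) - ind A (x + (r, h)))

lemma ind_of_mem {A : Set (ℝ × ℝ)} {x : ℝ × ℝ} (h : x ∈ A) : ind A x = 1 := by simp [ind, h]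

lemma ind_of_notMem {A : Set (ℝ × ℝ)} {x : ℝ × ℝ} (h : x ∉ A) : ind A x = 0 := by simp [ind, h]

lemma ind_nonneg (A : Set (ℝ × ℝ)) (x : ℝ × ℝ) : 0 ≤ ind A x := by
  by_cases h : x ∈ A <;> simp [ind, h]

lemma ind_le_one (A : Set (ℝ × ℝ)) (x : ℝ × ℝ) : ind A x ≤ 1 := by
  by_cases h : x ∈ A <;> simp [ind, h]

lemma measurable_ind {A : Set (ℝ × ℝ)} (hA : IsCompact A) : Measurable (ind A) :=
  measurable_one.indicator hA.measurableSet

lemma integrable_ind {A : Set (ℝ × ℝ)} (hA : IsCompact A) : Integrable (ind A) :=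
  (integrable_indicator_iff hA.measurableSet).2 (integrableOn_const hA.measure_lt_top.ne)

lemma integrable_ind_mul {A : Set (ℝ × ℝ)} (hA : IsCompact A) (a b : ℝ × ℝ) :
    Integrable fun y => ind A (y + a) * ind A (y + b) := by
  refine ((integrable_ind hA).comp_add_right a).mul_bdd (c := 1)
    ((measurable_ind hA).comp (measurable_add_const b)).aestronglyMeasurable
    (Eventually.of_forall fun y => ?_)
  rw [Real.norm_of_nonneg (ind_nonneg _ _)]
  exact ind_le_one _ _

lemma cov_eq_integral {A : Set (ℝ × ℝ)} (hA : IsCompact A) (x : ℝ × ℝ) :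
    cov A x = ∫ y, ind A y * ind A (y + x) := by
  have hm : MeasurableSet {y | y ∈ A ∧ y + x ∈ A} :=
    hA.measurableSet.inter (hA.measurableSet.preimage (measurable_add_const x))
  rw [cov, ← integral_indicator_one hm]
  congr 1
  ext y
  by_cases h1 : y ∈ A <;> by_cases h2 : y + x ∈ A <;> simp [ind, h1, h2]

lemma integral_ind_mul {A : Set (ℝ × ℝ)} (hA : IsCompact A) (a b : ℝ × ℝ) :
    ∫ y, ind A (y + a) * ind A (y + b) = cov A (b - a) := by
  rw [cov_eq_integral hA, ← integral_add_right_eq_self (fun y => ind A y * ind A (y + (b - a))) a]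
  congr 1
  ext y
  rw [add_assoc y a (b - a), add_sub_cancel]

lemma corner_expand (A : Set (ℝ × ℝ)) (h r : ℝ) (y : ℝ × ℝ) :
    corner A h r y = (ind A (y + 0) * ind A (y + (r, 0)) - ind A (y + 0) * ind A (y + (r, h)))
      - (ind A (y + (0, h)) * ind A (y + (r, 0)) - ind A (y + (0, h)) * ind A (y + (r, h))) := by
  simp only [corner, add_zero]
  ring

lemma integrable_corner {A : Set (ℝ × ℝ)} (hA : IsCompact A) (h r : ℝ) :
    Integrable (corner A h r) := by
  rw [funext (corner_expand A h r)]
  exact ((integrable_ind_mul hA _ _).sub (integrable_ind_mul hA _ _)).sub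
    ((integrable_ind_mul hA _ _).sub (integrable_ind_mul hA _ _))

lemma integral_corner {A : Set (ℝ × ℝ)} (hA : IsCompact A) (h r : ℝ) :
    ∫ y, corner A h r y = 2 * cov A (r, 0) - cov A (r, h) - cov A (r, -h) := by
  simp_rw [corner_expand]
  have hsub : ∀ a b c d : ℝ × ℝ, Integrable fun y =>
      ind A (y + a) * ind A (y + b) - ind A (y + c) * ind A (y + d) := fun a b c d =>
    (integrable_ind_mul hA _ _).sub (integrable_ind_mul hA _ _)
  rw [integral_sub (hsub _ _ _ _) (hsub _ _ _ _),
    integral_sub (integrable_ind_mul hA _ _) (integrable_ind_mul hA _ _),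
    integral_sub (integrable_ind_mul hA _ _) (integrable_ind_mul hA _ _)]
  simp only [integral_ind_mul hA]
  simp
  ring

lemma isCompact_slice {A : Set (ℝ × ℝ)} (hA : IsCompact A) (s : ℝ) : IsCompact (slice A s) := by
  have h : slice A s ⊆ Prod.fst '' A := fun r hr => ⟨(r, s), hr, rfl⟩
  refine (hA.image continuous_fst).of_isClosed_subset ?_ h
  exact hA.isClosed.preimage (by fun_prop : Continuous fun r : ℝ => (r, s))

lemma len_nonneg (A : Set (ℝ × ℝ)) (s : ℝ) : 0 ≤ len A s := measureReal_nonneg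

lemma len_eq_integral {A : Set (ℝ × ℝ)} (hA : IsCompact A) (s : ℝ) :
    len A s = ∫ r, ind A (r, s) := by
  rw [len, ← integral_indicator_one (isCompact_slice hA s).measurableSet]
  rfl

lemma exists_box {A : Set (ℝ × ℝ)} (hA : IsCompact A) :
    ∃ R > 0, ∀ x ∈ A, |x.1| ≤ R ∧ |x.2| ≤ R := by
  obtain ⟨R, hR, h⟩ := hA.isBounded.exists_pos_norm_le
  exact ⟨R, hR, fun x hx => ⟨(norm_fst_le x).trans (h x hx), (norm_snd_le x).trans (h x hx)⟩⟩

lemma measurable_len {A : Set (ℝ × ℝ)} (hA : IsCompact A) : Measurable (len A) := by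
  rw [funext (len_eq_integral hA)]
  exact ((measurable_ind hA).stronglyMeasurable.integral_prod_left (μ := volume)
    (f := fun r s => ind A (r, s))).measurable

lemma len_le {A : Set (ℝ × ℝ)} {R : ℝ} (hR : ∀ x ∈ A, |x.1| ≤ R ∧ |x.2| ≤ R) (hR0 : 0 < R)
    (s : ℝ) : len A s ≤ 2 * R := by
  have h : slice A s ⊆ Icc (-R) R := fun r hr => abs_le.1 (hR _ hr).1
  calc len A s ≤ volume.real (Icc (-R) R) := measureReal_mono h measure_Icc_lt_top.ne
    _ = 2 * R := by rw [Real.volume_real_Icc_of_le (by linarith)]; ring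

lemma len_eq_zero {A : Set (ℝ × ℝ)} {s : ℝ} (h : ∀ x ∈ A, x.2 ≠ s) : len A s = 0 := by
  have : slice A s = ∅ := eq_empty_of_forall_notMem fun r hr => h _ hr rfl
  simp [len, this]

lemma integrable_len {A : Set (ℝ × ℝ)} (hA : IsCompact A) : Integrable (len A) := by
  rw [funext (len_eq_integral hA)]
  exact (integrable_ind hA).integral_prod_right

lemma integrable_len_mul {A : Set (ℝ × ℝ)} (hA : IsCompact A) (a b : ℝ) :
    Integrable fun s => len A (s + a) * len A (s + b) := by
  obtain ⟨R, hR0, hR⟩ := exists_box hA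
  refine ((integrable_len hA).comp_add_right a).mul_bdd (c := 2 * R)
    ((measurable_len hA).comp (measurable_add_const b)).aestronglyMeasurable
    (Eventually.of_forall fun y => ?_)
  rw [Real.norm_of_nonneg (len_nonneg _ _)]
  exact len_le hR hR0 _

lemma integral_cov_fst {A : Set (ℝ × ℝ)} (hA : IsCompact A) (t : ℝ) :
    ∫ r, cov A (r, t) = ∫ s, len A s * len A (s + t) := by
  simp_rw [cov_eq_integral hA]
  have hshift : ∀ y : ℝ × ℝ, ∫ r, ind A (y + (r, t)) = len A (y.2 + t) := by
    intro y
    rw [len_eq_integral hA, ← integral_add_left_eq_self (fun r => ind A (r, y.2 + t)) y.1]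
    rfl
  have hfi : Integrable (Function.uncurry fun (r : ℝ) (y : ℝ × ℝ) => ind A y * ind A (y + (r, t)))
      (volume.prod volume) := by
    obtain ⟨R, hR0, hR⟩ := exists_box hA
    have hmeas : Measurable (Function.uncurry
        fun (r : ℝ) (y : ℝ × ℝ) => ind A y * ind A (y + (r, t))) := by
      have := measurable_ind hA
      exact (this.comp measurable_snd).mul (this.comp (by fun_prop))
    have hbox : IntegrableOn (Function.uncurry
        fun (r : ℝ) (y : ℝ × ℝ) => ind A y * ind A (y + (r, t)))
        (Icc (-(2 * R)) (2 * R) ×ˢ A) (volume.prod volume) := by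
      refine IntegrableOn.of_bound ?_ hmeas.aestronglyMeasurable 1 (Eventually.of_forall ?_)
      · exact (isCompact_Icc.prod hA).measure_lt_top
      · rintro ⟨r, y⟩
        rw [Function.uncurry_apply_pair,
          Real.norm_of_nonneg (mul_nonneg (ind_nonneg _ _) (ind_nonneg _ _))]
        exact mul_le_one₀ (ind_le_one _ _) (ind_nonneg _ _) (ind_le_one _ _)
    refine (integrableOn_iff_integrable_of_support_subset ?_).1 hbox
    rintro ⟨r, y⟩ hy
    have h1 : y ∈ A := by
      by_contra h
      exact hy (by simp [Function.uncurry, ind_of_notMem h])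
    have h2 : y + (r, t) ∈ A := by
      by_contra h
      exact hy (by simp [Function.uncurry, ind_of_notMem h])
    have h3 := abs_le.1 (hR _ h1).1
    have h4 := abs_le.1 (hR _ h2).1
    simp only [Prod.fst_add] at h4
    exact ⟨⟨by linarith, by linarith⟩, h1⟩
  rw [integral_integral_swap hfi]
  simp_rw [integral_const_mul, hshift]
  have hint2 : Integrable (fun y : ℝ × ℝ => ind A y * len A (y.2 + t)) (volume.prod volume) := by
    have := hfi.integral_prod_right
    simp only [Function.uncurry, integral_const_mul, hshift] at this
    exact this
  rw [Measure.volume_eq_prod, integral_prod_symm _ hint2]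
  simp_rw [integral_mul_const, ← len_eq_integral hA]

lemma integral_sq_len_sub {A : Set (ℝ × ℝ)} (hA : IsCompact A) (t : ℝ) :
    ∫ s, (len A s - len A (s + t)) ^ 2
      = 2 * (∫ r, cov A (r, 0)) - 2 * ∫ r, cov A (r, t) := by
  have h (s : ℝ) : (len A s - len A (s + t)) ^ 2 = (len A (s + 0) * len A (s + 0)
      + len A (s + t) * len A (s + t)) - 2 * (len A (s + 0) * len A (s + t)) := by
    rw [add_zero]
    ring
  have h2 : ∫ s, len A (s + t) * len A (s + t) = ∫ s, len A s * len A s :=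
    integral_add_right_eq_self (fun s => len A s * len A s) t
  have hadd : Integrable fun s => len A (s + 0) * len A (s + 0)
      + len A (s + t) * len A (s + t) :=
    (integrable_len_mul hA _ _).add (integrable_len_mul hA _ _)
  simp_rw [h]
  rw [integral_sub hadd ((integrable_len_mul hA _ _).const_mul 2),
    integral_add (integrable_len_mul hA _ _) (integrable_len_mul hA _ _), integral_const_mul,
    integral_cov_fst hA, integral_cov_fst hA, h2]
  simp only [add_zero]
  ring

lemma exists_mem_frontier_of_isPreconnected {X : Type*} [TopologicalSpace X] {S A : Set X}
    (hS : IsPreconnected S) {x y : X} (hx : x ∈ S) (hxA : x ∈ A) (hy : y ∈ S) (hyA : y ∉ A) :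
    ∃ z ∈ S, z ∈ frontier A := by
  by_contra! h
  have key : ∀ z ∈ S, z ∈ closure A → z ∈ interior A := fun z hz hc => by
    by_contra hi
    exact h z hz ⟨hc, hi⟩
  obtain ⟨z, -, hz1, hz2⟩ := hS (interior A) (closure A)ᶜ isOpen_interior
    isClosed_closure.isOpen_compl
    (fun z hz => by
      by_cases hc : z ∈ closure A
      · exact Or.inl (key z hz hc)
      · exact Or.inr hc)
    ⟨x, hx, key x hx (subset_closure hxA)⟩
    ⟨y, hy, fun hc => hyA (interior_subset (key y hy hc))⟩
  exact hz2 (subset_closure (interior_subset hz1))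

lemma exists_mem_add_mem_of_cov_eq {A K : Set (ℝ × ℝ)} (hA : IsCompact A)
    (hreg : A = closure (interior A)) (hK : IsCompact K) (hcov : ∀ x, cov A x = cov K x)
    {x y : ℝ × ℝ} (hy : y ∈ A) (hyx : y + x ∈ A) : ∃ z ∈ K, z + x ∈ K := by
  have hclosed : IsClosed ((fun w : (ℝ × ℝ) × (ℝ × ℝ) => w.2 - w.1) '' (K ×ˢ K)) :=
    ((hK.prod hK).image (by fun_prop)).isClosed
  have hmem : x ∈ closure ((fun w : (ℝ × ℝ) × (ℝ × ℝ) => w.2 - w.1) ''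
      (interior A ×ˢ interior A)) := by
    refine image_closure_subset_closure_image (by fun_prop) ⟨(y, y + x), ?_, by simp⟩
    rw [closure_prod_eq, ← hreg]
    exact ⟨hy, hyx⟩
  have hsub : (fun w : (ℝ × ℝ) × (ℝ × ℝ) => w.2 - w.1) '' (interior A ×ˢ interior A)
      ⊆ (fun w : (ℝ × ℝ) × (ℝ × ℝ) => w.2 - w.1) '' (K ×ˢ K) := by
    rintro _ ⟨⟨u, v⟩, ⟨hu, hv⟩, rfl⟩
    simp only at hu hv ⊢
    have hpos : 0 < cov A (v - u) := by
      have hopen : IsOpen (interior A ∩ (fun w => w + (v - u)) ⁻¹' interior A) :=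
        isOpen_interior.inter (isOpen_interior.preimage (by fun_prop))
      have hne : (interior A ∩ (fun w => w + (v - u)) ⁻¹' interior A).Nonempty :=
        ⟨u, hu, by simpa using hv⟩
      refine ENNReal.toReal_pos (((hopen.measure_pos volume hne).trans_le
        (measure_mono ?_)).ne') ((measure_mono fun w hw => hw.1).trans_lt hA.measure_lt_top).ne
      exact fun w hw => ⟨interior_subset hw.1, interior_subset hw.2⟩
    have hne : {w | w ∈ K ∧ w + (v - u) ∈ K}.Nonempty := by
      rw [hcov, cov] at hpos
      by_contra hemp
      rw [not_nonempty_iff_eq_empty] at hemp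
      simp [hemp] at hpos
    obtain ⟨w, hw1, hw2⟩ := hne
    exact ⟨(w, w + (v - u)), ⟨hw1, hw2⟩, by simp⟩
  obtain ⟨⟨u, v⟩, ⟨hu, hv⟩, huv⟩ := closure_minimal hsub hclosed hmem
  exact ⟨u, hu, by rw [← huv]; simpa using hv⟩

/-- The points lying on two non-parallel segments of a family. -/
def crossings {m : ℕ} (p q : Fin m → ℝ × ℝ) : Set (ℝ × ℝ) :=
  {x | ∃ i j, (q i - p i).1 * (q j - p j).2 - (q i - p i).2 * (q j - p j).1 ≠ 0 ∧
    x ∈ segment ℝ (p i) (q i) ∧ x ∈ segment ℝ (p j) (q j)}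

lemma exists_param_of_mem_segment {p q x : ℝ × ℝ} (hx : x ∈ segment ℝ p q) :
    ∃ θ : ℝ, 0 ≤ θ ∧ θ ≤ 1 ∧ x.1 = p.1 + θ * (q - p).1 ∧ x.2 = p.2 + θ * (q - p).2 := by
  rw [segment_eq_image'] at hx
  obtain ⟨θ, hθ, rfl⟩ := hx
  exact ⟨θ, hθ.1, hθ.2, by simp, by simp⟩

lemma finite_crossings {m : ℕ} (p q : Fin m → ℝ × ℝ) : (crossings p q).Finite := by
  have h : crossings p q ⊆ ⋃ i, ⋃ j, {x | (q i - p i).1 * (q j - p j).2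
      - (q i - p i).2 * (q j - p j).1 ≠ 0 ∧
      x ∈ segment ℝ (p i) (q i) ∧ x ∈ segment ℝ (p j) (q j)} := by
    rintro x ⟨i, j, hx⟩
    exact mem_iUnion₂.2 ⟨i, j, hx⟩
  refine (finite_iUnion fun i => finite_iUnion fun j => Set.Subsingleton.finite ?_).subset h
  rintro x ⟨hd, hxi, hxj⟩ y ⟨-, hyi, hyj⟩
  obtain ⟨a, -, -, ha1, ha2⟩ := exists_param_of_mem_segment hxi
  obtain ⟨b, -, -, hb1, hb2⟩ := exists_param_of_mem_segment hxj
  obtain ⟨c, -, -, hc1, hc2⟩ := exists_param_of_mem_segment hyi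
  obtain ⟨d, -, -, hd1, hd2⟩ := exists_param_of_mem_segment hyj
  have hac : (a - c) * ((q i - p i).1 * (q j - p j).2 - (q i - p i).2 * (q j - p j).1) = 0 := by
    linear_combination (-ha1 + hc1 + hb1 - hd1) * (q j - p j).2
      - (-ha2 + hc2 + hb2 - hd2) * (q j - p j).1
  have hac' : a = c := sub_eq_zero.1 ((mul_eq_zero.1 hac).resolve_right hd)
  ext
  · rw [ha1, hc1, hac']
  · rw [ha2, hc2, hac']

lemma convex_halfball (x ν : ℝ × ℝ) (ε : ℝ) :
    Convex ℝ {y ∈ Metric.ball x ε | 0 < ν.1 * (y - x).1 + ν.2 * (y - x).2} := by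
  suffices hhalf : Convex ℝ {y : ℝ × ℝ | 0 < ν.1 * (y - x).1 + ν.2 * (y - x).2} from
    (convex_ball x ε).inter hhalf
  intro y hy z hz a b ha hb hab
  rw [mem_ofPred_eq] at hy hz ⊢
  simp only [Prod.fst_sub, Prod.snd_sub, Prod.fst_add, Prod.snd_add, Prod.smul_fst,
    Prod.smul_snd, smul_eq_mul] at hy hz ⊢
  have : ν.1 * (a * y.1 + b * z.1 - x.1) + ν.2 * (a * y.2 + b * z.2 - x.2)
      = a * (ν.1 * (y.1 - x.1) + ν.2 * (y.2 - x.2))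
        + b * (ν.1 * (z.1 - x.1) + ν.2 * (z.2 - x.2)) := by
    linear_combination (ν.1 * x.1 + ν.2 * x.2) * hab
  rw [this]
  rcases ha.eq_or_lt with rfl | ha
  · have : b = 1 := by linarith
    simpa [this] using hz
  · have := mul_pos ha hy
    have := mul_nonneg hb hz.le
    linarith

lemma mem_closure_halfball {x ν : ℝ × ℝ} (hν : ν ≠ 0) {ε : ℝ} {y : ℝ × ℝ}
    (hy : y ∈ Metric.ball x ε) (h0 : 0 ≤ ν.1 * (y - x).1 + ν.2 * (y - x).2) :
    y ∈ closure {y ∈ Metric.ball x ε | 0 < ν.1 * (y - x).1 + ν.2 * (y - x).2} := by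
  have hpos : 0 < ν.1 * ν.1 + ν.2 * ν.2 := by
    rcases ne_or_eq ν.1 0 with h | h
    · nlinarith [mul_self_pos.2 h, mul_self_nonneg ν.2]
    · have h2 : ν.2 ≠ 0 := fun h2 => hν (Prod.ext h h2)
      nlinarith [mul_self_pos.2 h2, mul_self_nonneg ν.1]
  have ht : Tendsto (fun t : ℝ => y + t • ν) (𝓝[>] 0) (𝓝 y) := by
    have : Tendsto (fun t : ℝ => y + t • ν) (𝓝 0) (𝓝 (y + (0 : ℝ) • ν)) :=
      Continuous.tendsto (by fun_prop) 0
    simpa using this.mono_left nhdsWithin_le_nhds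
  refine mem_closure_of_tendsto ht ?_
  filter_upwards [ht (Metric.isOpen_ball.mem_nhds hy), self_mem_nhdsWithin] with t h1 h2
  refine ⟨h1, ?_⟩
  simp only [Prod.fst_sub, Prod.snd_sub, Prod.fst_add, Prod.snd_add, Prod.smul_fst,
    Prod.smul_snd, smul_eq_mul] at h0 ⊢
  have : 0 < t * (ν.1 * ν.1 + ν.2 * ν.2) := mul_pos h2 hpos
  nlinarith

lemma eventually_mem_iff_halfplane {A : Set (ℝ × ℝ)} (hreg : A = closure (interior A)) {m : ℕ}
    {p q : Fin m → ℝ × ℝ} (hpq : ∀ i, p i ≠ q i)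
    (hfr : frontier A = ⋃ i, segment ℝ (p i) (q i)) {x : ℝ × ℝ} (hx : x ∈ frontier A)
    (hxc : x ∉ crossings p q) :
    ∃ ν : ℝ × ℝ, ν ≠ 0 ∧
      (∀ i, x ∈ segment ℝ (p i) (q i) → ν.1 * (q i - p i).1 + ν.2 * (q i - p i).2 = 0) ∧
      ∀ᶠ y in 𝓝 x, (y ∈ A ↔ ν.1 * (y - x).1 + ν.2 * (y - x).2 ≤ 0) := by
  have hclosed : IsClosed A := by rw [hreg]; exact isClosed_closure
  obtain ⟨i, hi⟩ := mem_iUnion.1 (hfr ▸ hx)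
  obtain ⟨ν, hνdef⟩ : ∃ ν : ℝ × ℝ, ν = (-(q i - p i).2, (q i - p i).1) := ⟨_, rfl⟩
  have hν : ν ≠ 0 := by
    rintro rfl
    apply hpq i
    have h1 := congrArg Prod.fst hνdef
    have h2 := congrArg Prod.snd hνdef
    simp only [Prod.fst_zero, Prod.snd_zero, Prod.fst_sub, Prod.snd_sub] at h1 h2
    ext <;> linarith
  have hpar : ∀ j, x ∈ segment ℝ (p j) (q j) →
      ν.1 * (q j - p j).1 + ν.2 * (q j - p j).2 = 0 := by
    intro j hj
    by_contra hne
    refine hxc ⟨i, j, fun h => hne ?_, hi, hj⟩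
    rw [hνdef]
    linear_combination h
  have hline : ∀ᶠ y in 𝓝 x, y ∈ frontier A → ν.1 * (y - x).1 + ν.2 * (y - x).2 = 0 := by
    have : ∀ j, ∀ᶠ y in 𝓝 x, y ∈ segment ℝ (p j) (q j) →
        ν.1 * (y - x).1 + ν.2 * (y - x).2 = 0 := by
      intro j
      by_cases hj : x ∈ segment ℝ (p j) (q j)
      · refine Eventually.of_forall fun y hy => ?_
        obtain ⟨a, -, -, ha1, ha2⟩ := exists_param_of_mem_segment hy
        obtain ⟨b, -, -, hb1, hb2⟩ := exists_param_of_mem_segment hj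
        simp only [Prod.fst_sub, Prod.snd_sub]
        rw [ha1, ha2, hb1, hb2]
        linear_combination (a - b) * hpar j hj
      · have hcl : IsClosed (segment ℝ (p j) (q j)) := by
          rw [← convexHull_pair]
          exact (Set.toFinite _).isClosed_convexHull ℝ
        filter_upwards [hcl.isOpen_compl.mem_nhds hj] with y hy hy'
        exact absurd hy' hy
    filter_upwards [eventually_all.2 this] with y hy hyf
    obtain ⟨j, hj⟩ := mem_iUnion.1 (hfr ▸ hyf)
    exact hy j hj
  obtain ⟨ε, hε, hball⟩ := Metric.eventually_nhds_iff_ball.1 hline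
  have hdich : ∀ μ : ℝ × ℝ, (∀ y ∈ Metric.ball x ε, y ∈ frontier A →
      μ.1 * (y - x).1 + μ.2 * (y - x).2 = 0) →
      ({y ∈ Metric.ball x ε | 0 < μ.1 * (y - x).1 + μ.2 * (y - x).2} ⊆ A) ∨
      (∀ y ∈ Metric.ball x ε, 0 < μ.1 * (y - x).1 + μ.2 * (y - x).2 → y ∉ A) := by
    intro μ hμ
    by_contra! hcon
    obtain ⟨h1, y, hy, hy0, hyA⟩ := hcon
    obtain ⟨z, hz, hzA⟩ := not_subset.1 h1
    obtain ⟨w, hw, hwf⟩ := exists_mem_frontier_of_isPreconnected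
      (convex_halfball x μ ε).isPreconnected (x := y) ⟨hy, hy0⟩ hyA hz hzA
    exact hw.2.ne' (hμ w hw.1 hwf)
  have hneg : ∀ y : ℝ × ℝ, (-ν).1 * (y - x).1 + (-ν).2 * (y - x).2
      = -(ν.1 * (y - x).1 + ν.2 * (y - x).2) := fun y => by
    simp only [Prod.fst_neg, Prod.snd_neg]
    ring
  have hν' : -ν ≠ 0 := neg_ne_zero.2 hν
  have hballmem : Metric.ball x ε ∈ 𝓝 x := Metric.ball_mem_nhds x hε
  have hfill : ∀ μ : ℝ × ℝ, μ ≠ 0 →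
      {y ∈ Metric.ball x ε | 0 < μ.1 * (y - x).1 + μ.2 * (y - x).2} ⊆ A →
      ∀ y ∈ Metric.ball x ε, 0 ≤ μ.1 * (y - x).1 + μ.2 * (y - x).2 → y ∈ A :=
    fun μ hμ hsub y hy h0 => closure_minimal hsub hclosed (mem_closure_halfball hμ hy h0)
  have hpos := hdich ν hball
  have hnegd := hdich (-ν) fun y hy hyf => by rw [hneg, hball y hy hyf, neg_zero]
  rcases hpos with h1 | h1 <;> rcases hnegd with h2 | h2
  · exfalso
    refine hx.2 (mem_interior_iff_mem_nhds.2 (mem_of_superset hballmem fun y hy => ?_))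
    rcases le_total 0 (ν.1 * (y - x).1 + ν.2 * (y - x).2) with h | h
    · exact hfill ν hν h1 y hy h
    · exact hfill (-ν) hν' h2 y hy (by rw [hneg]; linarith)
  · refine ⟨-ν, hν', fun j hj => ?_, ?_⟩
    · have := hpar j hj
      simp only [Prod.fst_neg, Prod.snd_neg]
      linarith
    · filter_upwards [hballmem] with y hy
      constructor
      · intro hyA
        by_contra! hlt
        exact h2 y hy hlt hyA
      · intro hle
        rw [hneg] at hle
        exact hfill ν hν h1 y hy (by linarith)
  · refine ⟨ν, hν, hpar, ?_⟩
    filter_upwards [hballmem] with y hy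
    constructor
    · intro hyA
      by_contra! hlt
      exact h1 y hy hlt hyA
    · intro hle
      exact hfill (-ν) hν' h2 y hy (by rw [hneg]; linarith)
  · exfalso
    have hxA : x ∈ closure (interior A) := by
      rw [← hreg, ← hclosed.closure_eq]
      exact hx.1
    obtain ⟨z, hz, hzA⟩ := mem_closure_iff_nhds.1 hxA _ hballmem
    have hzcl := mem_closure_halfball (ν := if 0 ≤ ν.1 * (z - x).1 + ν.2 * (z - x).2
      then ν else -ν) (by split_ifs <;> assumption) hz
      (by split_ifs with h
          · exact h
          · rw [hneg]; linarith)
    obtain ⟨w, hw, hwpos⟩ := mem_closure_iff.1 hzcl _ isOpen_interior hzA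
    split_ifs at hwpos
    · exact h1 w hwpos.1 hwpos.2 (interior_subset hw)
    · exact h2 w hwpos.1 hwpos.2 (interior_subset hw)

/-- Away from the crossings, a polygonal set is locally a half-plane, the plane or empty. -/
lemma eventually_mem_iff_le {A : Set (ℝ × ℝ)} (hreg : A = closure (interior A)) {m : ℕ}
    {p q : Fin m → ℝ × ℝ} (hpq : ∀ i, p i ≠ q i)
    (hfr : frontier A = ⋃ i, segment ℝ (p i) (q i)) {x : ℝ × ℝ} (hxc : x ∉ crossings p q) :
    ∃ (ν : ℝ × ℝ) (c : ℝ), ∀ᶠ y in 𝓝 x, (y ∈ A ↔ ν.1 * y.1 + ν.2 * y.2 ≤ c) := by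
  by_cases hx : x ∈ frontier A
  · obtain ⟨ν, -, -, h⟩ := eventually_mem_iff_halfplane hreg hpq hfr hx hxc
    refine ⟨ν, ν.1 * x.1 + ν.2 * x.2, h.mono fun y hy => hy.trans ?_⟩
    simp only [Prod.fst_sub, Prod.snd_sub]
    constructor <;> intro h <;> linarith
  · by_cases hxi : x ∈ interior A
    · refine ⟨0, 0, ?_⟩
      filter_upwards [isOpen_interior.mem_nhds hxi] with y hy
      simp [interior_subset hy]
    · have hxcl : x ∉ closure A := fun h => hx ⟨h, hxi⟩
      refine ⟨0, -1, ?_⟩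
      filter_upwards [isClosed_closure.isOpen_compl.mem_nhds hxcl] with y hy
      have : y ∉ A := fun h => hy (subset_closure h)
      simp [this]

/-- The union of the horizontal segments of a family. -/
def horiz {m : ℕ} (p q : Fin m → ℝ × ℝ) : Set (ℝ × ℝ) :=
  {x | ∃ i, (p i).2 = (q i).2 ∧ x ∈ segment ℝ (p i) (q i)}

lemma isCompact_segment (p q : ℝ × ℝ) : IsCompact (segment ℝ p q) := by
  rw [← convexHull_pair]
  exact (Set.toFinite _).isCompact_convexHull ℝ

lemma isCompact_horiz {m : ℕ} (p q : Fin m → ℝ × ℝ) : IsCompact (horiz p q) := by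
  have : horiz p q = ⋃ i ∈ {i | (p i).2 = (q i).2}, segment ℝ (p i) (q i) := by
    ext x
    simp [horiz]
  rw [this]
  exact (Set.toFinite _).isCompact_biUnion fun i _ => isCompact_segment _ _

lemma corner_nonneg_of_halfplane {A : Set (ℝ × ℝ)} {h r c : ℝ} {ν x : ℝ × ℝ}
    (h1 : x ∈ A ↔ ν.1 * x.1 + ν.2 * x.2 ≤ c)
    (h2 : x + (0, h) ∈ A ↔ ν.1 * (x + (0, h)).1 + ν.2 * (x + (0, h)).2 ≤ c)
    (h3 : x + (r, 0) ∈ A ↔ ν.1 * (x + (r, 0)).1 + ν.2 * (x + (r, 0)).2 ≤ c)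
    (h4 : x + (r, h) ∈ A ↔ ν.1 * (x + (r, h)).1 + ν.2 * (x + (r, h)).2 ≤ c) :
    0 ≤ corner A h r x := by
  simp only [Prod.fst_add, Prod.snd_add, add_zero] at h2 h3 h4
  by_cases k1 : x ∈ A <;> by_cases k2 : x + (0, h) ∈ A <;> by_cases k3 : x + (r, 0) ∈ A <;>
    by_cases k4 : x + (r, h) ∈ A <;> simp [corner, ind, k1, k2, k3, k4]
  · rw [h1] at k1
    rw [h2] at k2
    rw [h3] at k3
    rw [h4] at k4
    linarith
  · rw [h1] at k1
    rw [h2] at k2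
    rw [h3] at k3
    rw [h4] at k4
    linarith

lemma abs_corner_le (A : Set (ℝ × ℝ)) (h r : ℝ) (x : ℝ × ℝ) :
    |corner A h r x| ≤ |ind A x - ind A (x + (0, h))| := by
  rw [corner, abs_mul]
  refine mul_le_of_le_one_right (abs_nonneg _) (abs_le.2 ⟨?_, ?_⟩)
  · linarith [ind_nonneg A (x + (r, 0)), ind_le_one A (x + (r, h))]
  · linarith [ind_nonneg A (x + (r, h)), ind_le_one A (x + (r, 0))]

lemma exists_mem_segment_of_ind_ne {A : Set (ℝ × ℝ)} {m : ℕ} {p q : Fin m → ℝ × ℝ}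
    (hfr : frontier A = ⋃ i, segment ℝ (p i) (q i)) {r s h : ℝ} (hh : 0 ≤ h)
    (hne : ind A (r, s) ≠ ind A (r, s + h)) :
    ∃ i, ∃ s' ∈ Icc s (s + h), (r, s') ∈ segment ℝ (p i) (q i) := by
  have hpre : IsPreconnected ((fun s' : ℝ => (r, s')) '' Icc s (s + h)) :=
    isPreconnected_Icc.image _ (by fun_prop)
  have hl : (r, s) ∈ (fun s' : ℝ => (r, s')) '' Icc s (s + h) := ⟨s, by simp [hh], rfl⟩
  have hu : (r, s + h) ∈ (fun s' : ℝ => (r, s')) '' Icc s (s + h) := ⟨s + h, by simp [hh], rfl⟩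
  have : ∃ z ∈ (fun s' : ℝ => (r, s')) '' Icc s (s + h), z ∈ frontier A := by
    by_cases h1 : (r, s) ∈ A
    · by_cases h2 : (r, s + h) ∈ A
      · simp [ind, h1, h2] at hne
      · exact exists_mem_frontier_of_isPreconnected hpre hl h1 hu h2
    · by_cases h2 : (r, s + h) ∈ A
      · exact exists_mem_frontier_of_isPreconnected hpre hu h2 hl h1
      · simp [ind, h1, h2] at hne
  obtain ⟨_, ⟨s', hs', rfl⟩, hz⟩ := this
  obtain ⟨i, hi⟩ := mem_iUnion.1 (hfr ▸ hz)
  exact ⟨i, s', hs', hi⟩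

lemma abs_corner_le_sum {A : Set (ℝ × ℝ)} {m : ℕ} {p q : Fin m → ℝ × ℝ}
    (hfr : frontier A = ⋃ i, segment ℝ (p i) (q i)) {h r a : ℝ} (hh : 0 ≤ h)
    (ha : ∀ i, a ≠ (p i).1) (s : ℝ) :
    |corner A h r (a, s)| ≤ ∑ i, (Icc ((p i).2 + (a - (p i).1) / (q i - p i).1 * (q i - p i).2 - h)
      ((p i).2 + (a - (p i).1) / (q i - p i).1 * (q i - p i).2)).indicator 1 s := by
  have hnn : ∀ i, (0 : ℝ) ≤ (Icc ((p i).2 + (a - (p i).1) / (q i - p i).1 * (q i - p i).2 - h)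
      ((p i).2 + (a - (p i).1) / (q i - p i).1 * (q i - p i).2)).indicator 1 s :=
    fun i => indicator_nonneg (fun _ _ => zero_le_one) s
  refine (abs_corner_le A h r (a, s)).trans ?_
  by_cases hne : ind A (a, s) = ind A (a, s + h)
  · have : ind A ((a, s) + (0, h)) = ind A (a, s) := by simp [hne]
    rw [this, sub_self, abs_zero]
    exact Finset.sum_nonneg fun i _ => hnn i
  · obtain ⟨i, s', hs', hi⟩ := exists_mem_segment_of_ind_ne hfr hh hne
    refine le_trans ?_ (Finset.single_le_sum (fun i _ => hnn i) (Finset.mem_univ i))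
    obtain ⟨θ, -, -, h1, h2⟩ := exists_param_of_mem_segment hi
    simp only at h1 h2
    have hd : (q i - p i).1 ≠ 0 := by
      intro h0
      rw [h0, mul_zero, add_zero] at h1
      exact ha i h1
    have hθ : (a - (p i).1) / (q i - p i).1 = θ := by
      rw [div_eq_iff hd]
      linarith
    rw [hθ, ← h2, indicator_of_mem (show s ∈ Icc (s' - h) s' from ⟨by linarith [hs'.2], hs'.1⟩),
      abs_le]
    simp only [Pi.one_apply]
    constructor
    · linarith [ind_nonneg A (a, s), ind_le_one A ((a, s) + (0, h))]
    · linarith [ind_nonneg A ((a, s) + (0, h)), ind_le_one A (a, s)]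

lemma measurable_corner {A : Set (ℝ × ℝ)} (hA : IsCompact A) (h r : ℝ) :
    Measurable (corner A h r) := by
  have := measurable_ind hA
  exact (this.sub (this.comp (by fun_prop))).mul
    ((this.comp (by fun_prop)).sub (this.comp (by fun_prop)))

lemma integrable_corner_slice {A : Set (ℝ × ℝ)} (hA : IsCompact A) {m : ℕ}
    {p q : Fin m → ℝ × ℝ} (hfr : frontier A = ⋃ i, segment ℝ (p i) (q i)) {h r a : ℝ}
    (hh : 0 ≤ h) (ha : ∀ i, a ≠ (p i).1) :
    Integrable (fun s => corner A h r (a, s)) ∧ |∫ s, corner A h r (a, s)| ≤ m * h := by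
  have hfi : ∀ i, Integrable ((Icc ((p i).2 + (a - (p i).1) / (q i - p i).1 * (q i - p i).2 - h)
      ((p i).2 + (a - (p i).1) / (q i - p i).1 * (q i - p i).2)).indicator (1 : ℝ → ℝ)) :=
    fun i => (integrable_indicator_iff measurableSet_Icc).2
      (integrableOn_const measure_Icc_lt_top.ne)
  have hsum := integrable_finsetSum Finset.univ fun i _ => hfi i
  refine ⟨hsum.mono' ((measurable_corner hA h r).comp (by fun_prop)).aestronglyMeasurable
    (Eventually.of_forall fun s => abs_corner_le_sum hfr hh ha s), ?_⟩
  calc |∫ s, corner A h r (a, s)| ≤ ∫ s, |corner A h r (a, s)| := abs_integral_le_integral_abs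
    _ ≤ ∫ s, ∑ i, (Icc ((p i).2 + (a - (p i).1) / (q i - p i).1 * (q i - p i).2 - h)
        ((p i).2 + (a - (p i).1) / (q i - p i).1 * (q i - p i).2)).indicator 1 s :=
      integral_mono_of_nonneg (Eventually.of_forall fun s => abs_nonneg _) hsum
        (Eventually.of_forall fun s => abs_corner_le_sum hfr hh ha s)
    _ = m * h := by
      rw [integral_finsetSum _ fun i _ => hfi i]
      have : ∀ i, ∫ s, (Icc ((p i).2 + (a - (p i).1) / (q i - p i).1 * (q i - p i).2 - h)
        ((p i).2 + (a - (p i).1) / (q i - p i).1 * (q i - p i).2)).indicator (1 : ℝ → ℝ) s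
          = h := fun i => by
        rw [integral_indicator_one measurableSet_Icc, Real.volume_real_Icc_of_le (by linarith)]
        ring
      rw [Finset.sum_congr rfl fun i _ => this i]
      simp

lemma corner_eq_zero_of_box {A : Set (ℝ × ℝ)} {R : ℝ} (hR : ∀ x ∈ A, |x.1| ≤ R ∧ |x.2| ≤ R)
    {h r a s : ℝ} (hh : 0 ≤ h) (hh1 : h ≤ 1)
    (hs : R + 1 < |a| ∨ R + 1 < |s|) : corner A h r (a, s) = 0 := by
  have key : ∀ u v, 0 ≤ u → u ≤ 1 → 0 ≤ v → v ≤ 1 → (a, s) + (u, v) ∉ A := by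
    intro u v hu hu1 hv hv1 hmem
    obtain ⟨k1, k2⟩ := hR _ hmem
    simp only [Prod.mk_add_mk, abs_le] at k1 k2
    rcases hs with hs | hs <;> rcases lt_abs.1 hs with hs | hs <;> linarith
  have h1 : (a, s) ∉ A := by simpa using key 0 0 le_rfl zero_le_one le_rfl zero_le_one
  have h2 := key 0 h le_rfl zero_le_one hh hh1
  rw [corner, ind_of_notMem h1, ind_of_notMem h2]
  simp

lemma eventually_corner_nonneg {A : Set (ℝ × ℝ)} (hA : IsCompact A)
    (hreg : A = closure (interior A)) {m : ℕ} {p q : Fin m → ℝ × ℝ} (hpq : ∀ i, p i ≠ q i)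
    (hfr : frontier A = ⋃ i, segment ℝ (p i) (q i)) {a : ℝ} (ha : ∀ s, (a, s) ∉ crossings p q)
    {ε : ℝ} (hε : 0 < ε) :
    ∀ᶠ r in 𝓝[>] (0 : ℝ), ∀ s, 0 ≤ corner A (ε * r) r (a, s) := by
  obtain ⟨R, hR0, hR⟩ := exists_box hA
  have hloc : ∀ s ∈ Icc (-(R + 1)) (R + 1), ∀ᶠ z : ℝ × ℝ in 𝓝 ((0 : ℝ), s),
      0 ≤ corner A (ε * z.1) z.1 (a, z.2) := by
    intro s _
    obtain ⟨ν, c, hνc⟩ := eventually_mem_iff_le hreg hpq hfr (ha s)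
    have ht : ∀ u v : ℝ, Tendsto (fun z : ℝ × ℝ => (a, z.2) + (u * z.1, v * z.1))
        (𝓝 ((0 : ℝ), s)) (𝓝 (a, s)) := by
      intro u v
      have : Continuous fun z : ℝ × ℝ => (a, z.2) + (u * z.1, v * z.1) := by fun_prop
      simpa using this.tendsto ((0 : ℝ), s)
    filter_upwards [(ht 0 0).eventually hνc, (ht 0 ε).eventually hνc, (ht 1 0).eventually hνc,
      (ht 1 ε).eventually hνc] with z h1 h2 h3 h4
    rw [zero_mul, ← Prod.zero_eq_mk, add_zero] at h1
    rw [zero_mul] at h2 h3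
    rw [one_mul] at h3 h4
    exact corner_nonneg_of_halfplane h1 h2 h3 h4
  have hcpt := isCompact_Icc.eventually_forall_of_forall_eventually (x₀ := (0 : ℝ))
    (P := fun r s => 0 ≤ corner A (ε * r) r (a, s)) hloc
  have hsmall : ∀ᶠ r in 𝓝[>] (0 : ℝ), ε * r < 1 := by
    have : Tendsto (fun r : ℝ => ε * r) (𝓝[>] 0) (𝓝 0) := by
      have : Tendsto (fun r : ℝ => ε * r) (𝓝 0) (𝓝 (ε * 0)) := Continuous.tendsto (by fun_prop) 0
      simpa using this.mono_left nhdsWithin_le_nhds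
    exact this.eventually (gt_mem_nhds one_pos)
  filter_upwards [hcpt.filter_mono nhdsWithin_le_nhds, hsmall, Ioo_mem_nhdsGT one_pos]
    with r h1 h2 h3 s
  by_cases hs : s ∈ Icc (-(R + 1)) (R + 1)
  · exact h1 s hs
  · rw [corner_eq_zero_of_box hR (mul_pos hε h3.1).le h2.le]
    right
    by_contra! hcon
    exact hs (abs_le.1 hcon)

lemma eventually_corner_eq_one {A : Set (ℝ × ℝ)}
    (hreg : A = closure (interior A)) {m : ℕ} {p q : Fin m → ℝ × ℝ} (hpq : ∀ i, p i ≠ q i)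
    (hfr : frontier A = ⋃ i, segment ℝ (p i) (q i)) {a s₀ : ℝ} (ha : (a, s₀) ∉ crossings p q)
    (has : (a, s₀) ∈ horiz p q) (ε : ℝ) :
    ∀ᶠ r in 𝓝[>] (0 : ℝ), ∀ s ∈ Ioo (s₀ - ε * r) s₀, corner A (ε * r) r (a, s) = 1 := by
  obtain ⟨i, hi, his⟩ := has
  have hxf : (a, s₀) ∈ frontier A := hfr ▸ mem_iUnion.2 ⟨i, his⟩
  obtain ⟨ν, hν, hpar, hev⟩ := eventually_mem_iff_halfplane hreg hpq hfr hxf ha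
  have hν1 : ν.1 = 0 := by
    have h := hpar i his
    simp only [Prod.fst_sub, Prod.snd_sub, hi, sub_self, mul_zero, add_zero] at h
    refine (mul_eq_zero.1 h).resolve_right fun h0 => hpq i (Prod.ext ?_ hi)
    linarith
  have hν2 : ν.2 ≠ 0 := fun h2 => hν (Prod.ext hν1 h2)
  obtain ⟨δ, hδ, hball⟩ := Metric.eventually_nhds_iff.1 hev
  have hsmall : ∀ᶠ r in 𝓝[>] (0 : ℝ), ε * r < δ := by
    have : Tendsto (fun r : ℝ => ε * r) (𝓝[>] 0) (𝓝 0) := by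
      have : Tendsto (fun r : ℝ => ε * r) (𝓝 0) (𝓝 (ε * 0)) := Continuous.tendsto (by fun_prop) 0
      simpa using this.mono_left nhdsWithin_le_nhds
    exact this.eventually (gt_mem_nhds hδ)
  filter_upwards [hsmall, Ioo_mem_nhdsGT hδ] with r h2 h3 s hs
  have key : ∀ u v : ℝ, |u| < δ → |s + v - s₀| < δ →
      ((a, s) + (u, v) ∈ A ↔ ν.2 * (s + v - s₀) ≤ 0) := by
    intro u v hu hv
    have := @hball ((a, s) + (u, v)) (by
      rw [Prod.dist_eq, max_lt_iff, Real.dist_eq, Real.dist_eq]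
      simpa using ⟨hu, hv⟩)
    simpa [hν1] using this
  have hr := h3.1
  have hrδ : |r| < δ := by rw [abs_of_pos hr]; exact h3.2
  have hd0 : |s + 0 - s₀| < δ := abs_lt.2 ⟨by linarith [hs.1], by linarith [hs.2]⟩
  have hd1 : |s + ε * r - s₀| < δ := abs_lt.2 ⟨by linarith [hs.1], by linarith [hs.2]⟩
  have k1 := key 0 0 (by simpa using hδ) hd0
  have k2 := key 0 (ε * r) (by simpa using hδ) hd1
  have k3 := key r 0 hrδ hd0
  have k4 := key r (ε * r) hrδ hd1
  rw [← Prod.zero_eq_mk, add_zero] at k1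
  have hneg : s + 0 - s₀ < 0 := by linarith [hs.2]
  have hpos : 0 < s + ε * r - s₀ := by linarith [hs.1]
  rcases lt_or_gt_of_ne hν2 with h | h
  · have e0 : ¬ ν.2 * (s + 0 - s₀) ≤ 0 := not_le.2 (mul_pos_of_neg_of_neg h hneg)
    have e1 : ν.2 * (s + ε * r - s₀) ≤ 0 := mul_nonpos_of_nonpos_of_nonneg h.le hpos.le
    rw [corner, ind_of_notMem (mt k1.1 e0), ind_of_mem (k2.2 e1), ind_of_notMem (mt k3.1 e0),
      ind_of_mem (k4.2 e1)]
    norm_num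
  · have e0 : ν.2 * (s + 0 - s₀) ≤ 0 := mul_nonpos_of_nonneg_of_nonpos h.le hneg.le
    have e1 : ¬ ν.2 * (s + ε * r - s₀) ≤ 0 := not_le.2 (mul_pos h hpos)
    rw [corner, ind_of_mem (k1.2 e0), ind_of_notMem (mt k2.1 e1), ind_of_mem (k3.2 e0),
      ind_of_notMem (mt k4.1 e1)]
    norm_num

lemma tendsto_mul_nhdsGT_zero (ε : ℝ) :
    Tendsto (fun r : ℝ => ε * r) (𝓝[>] 0) (𝓝 0) := by
  have : Tendsto (fun r : ℝ => ε * r) (𝓝 0) (𝓝 (ε * 0)) := Continuous.tendsto (by fun_prop) 0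
  simpa using this.mono_left nhdsWithin_le_nhds

lemma eventually_sum_le_integral_corner_slice {A : Set (ℝ × ℝ)} (hA : IsCompact A)
    (hreg : A = closure (interior A)) {m : ℕ} {p q : Fin m → ℝ × ℝ} (hpq : ∀ i, p i ≠ q i)
    (hfr : frontier A = ⋃ i, segment ℝ (p i) (q i)) {a : ℝ} (ha : ∀ s, (a, s) ∉ crossings p q)
    (hap : ∀ i, a ≠ (p i).1) {ε : ℝ} (hε : 0 < ε) (T : Finset ℝ) :
    ∀ᶠ r in 𝓝[>] (0 : ℝ), ε * r * ∑ s₀ ∈ T, ind (horiz p q) (a, s₀)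
      ≤ ∫ s, corner A (ε * r) r (a, s) := by
  have h1 := eventually_corner_nonneg hA hreg hpq hfr ha hε
  have h2 : ∀ᶠ r in 𝓝[>] (0 : ℝ), ∀ s₀ ∈ T, (a, s₀) ∈ horiz p q →
      ∀ s ∈ Ioo (s₀ - ε * r) s₀, corner A (ε * r) r (a, s) = 1 := by
    rw [eventually_all_finset]
    intro s₀ _
    by_cases has : (a, s₀) ∈ horiz p q
    · exact (eventually_corner_eq_one hreg hpq hfr (ha s₀) has ε).mono fun r hr _ => hr
    · exact Eventually.of_forall fun r h => absurd h has
  have h3 : ∀ᶠ r in 𝓝[>] (0 : ℝ), ∀ s₀ ∈ T, ∀ s₁ ∈ T, s₀ ≠ s₁ → ε * r < |s₀ - s₁| := by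
    rw [eventually_all_finset]
    intro s₀ _
    rw [eventually_all_finset]
    intro s₁ _
    by_cases hne : s₀ = s₁
    · exact Eventually.of_forall fun r h => absurd hne h
    · exact ((tendsto_mul_nhdsGT_zero ε).eventually
        (gt_mem_nhds (abs_pos.2 (sub_ne_zero.2 hne)))).mono fun r hr _ => hr
  filter_upwards [h1, h2, h3, self_mem_nhdsWithin] with r h1 h2 h3 hr
  have hεr : 0 < ε * r := mul_pos hε hr
  have hle : ∀ s, ∑ s₀ ∈ T, ind (horiz p q) (a, s₀) * (Ioo (s₀ - ε * r) s₀).indicator 1 s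
      ≤ corner A (ε * r) r (a, s) := by
    intro s
    by_cases hs : ∃ s₀ ∈ T, (a, s₀) ∈ horiz p q ∧ s ∈ Ioo (s₀ - ε * r) s₀
    · obtain ⟨s₀, hs₀, has, hs⟩ := hs
      rw [Finset.sum_eq_single s₀ _ (fun h => absurd hs₀ h), ind_of_mem has,
        indicator_of_mem hs, h2 s₀ hs₀ has s hs]
      · simp
      · intro s₁ hs₁ hne
        rw [indicator_of_notMem, mul_zero]
        intro hs'
        have := h3 s₁ hs₁ s₀ hs₀ hne
        rcases lt_abs.1 this with h | h <;> linarith [hs.1, hs.2, hs'.1, hs'.2]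
    · rw [Finset.sum_eq_zero]
      · exact h1 s
      · intro s₀ hs₀
        by_cases has : (a, s₀) ∈ horiz p q
        · rw [indicator_of_notMem, mul_zero]
          exact fun hs' => hs ⟨s₀, hs₀, has, hs'⟩
        · rw [ind_of_notMem has, zero_mul]
  have hfi : ∀ s₀, Integrable fun s =>
      ind (horiz p q) (a, s₀) * (Ioo (s₀ - ε * r) s₀).indicator (1 : ℝ → ℝ) s :=
    fun s₀ => ((integrable_indicator_iff measurableSet_Ioo).2
      (integrableOn_const measure_Ioo_lt_top.ne)).const_mul _
  calc ε * r * ∑ s₀ ∈ T, ind (horiz p q) (a, s₀)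
      = ∫ s, ∑ s₀ ∈ T, ind (horiz p q) (a, s₀) * (Ioo (s₀ - ε * r) s₀).indicator 1 s := by
        rw [integral_finsetSum _ fun i _ => hfi i, Finset.mul_sum]
        refine Finset.sum_congr rfl fun s₀ _ => ?_
        rw [integral_const_mul, integral_indicator_one measurableSet_Ioo,
          Real.volume_real_Ioo_of_le (by linarith)]
        ring
    _ ≤ _ := integral_mono (integrable_finsetSum _ fun i _ => hfi i)
        (integrable_corner_slice hA hfr hεr.le hap).1 hle

lemma eventually_sum_len_le_integral_corner {A : Set (ℝ × ℝ)} (hA : IsCompact A)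
    (hreg : A = closure (interior A)) {m : ℕ} {p q : Fin m → ℝ × ℝ} (hpq : ∀ i, p i ≠ q i)
    (hfr : frontier A = ⋃ i, segment ℝ (p i) (q i)) {ε η : ℝ} (hε : 0 < ε) (hη : 0 < η)
    (T : Finset ℝ) :
    ∀ᶠ r in 𝓝[>] (0 : ℝ), ε * r * (∑ s ∈ T, len (horiz p q) s - η)
      ≤ ∫ y, corner A (ε * r) r y := by
  obtain ⟨R, hR0, hR⟩ := exists_box hA
  have hH := isCompact_horiz p q
  set N : ℝ → ℝ := fun a => ∑ s₀ ∈ T, ind (horiz p q) (a, s₀) with hN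
  set F : ℝ → ℝ → ℝ := fun r a => (∫ s, corner A (ε * r) r (a, s)) / (ε * r) with hF
  have hindm : ∀ s₀, Integrable fun a => ind (horiz p q) (a, s₀) := fun s₀ =>
    (integrable_indicator_iff (isCompact_slice hH s₀).measurableSet).2
      (integrableOn_const (isCompact_slice hH s₀).measure_lt_top.ne)
  have hNint : Integrable N := integrable_finsetSum _ fun s₀ _ => hindm s₀
  have hN0 : ∀ a, 0 ≤ N a := fun a => Finset.sum_nonneg fun s₀ _ => ind_nonneg _ _
  have hNsum : ∫ a, N a = ∑ s ∈ T, len (horiz p q) s := by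
    rw [integral_finsetSum _ fun s₀ _ => hindm s₀]
    exact Finset.sum_congr rfl fun s _ => (len_eq_integral hH s).symm
  have hFint : ∀ r, Integrable (F r) := fun r =>
    (integrable_corner hA (ε * r) r).integral_prod_left.div_const _
  have hFsum : ∀ r, ∫ a, F r a = (∫ y, corner A (ε * r) r y) / (ε * r) := by
    intro r
    rw [integral_div]
    congr 1
    exact (integral_prod _ (integrable_corner hA (ε * r) r)).symm
  have hgood : ∀ᵐ a : ℝ, (∀ s, (a, s) ∉ crossings p q) ∧ ∀ i, a ≠ (p i).1 := by
    have hfin : (Prod.fst '' crossings p q ∪ range fun i => (p i).1).Finite :=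
      ((finite_crossings p q).image _).union (finite_range _)
    filter_upwards [compl_mem_ae_iff.2 (hfin.measure_zero volume)] with a ha
    exact ⟨fun s hs => ha (Or.inl (mem_image_of_mem Prod.fst hs)),
      fun i hi => ha (Or.inr (mem_range.2 ⟨i, hi.symm⟩))⟩
  have hlim : Tendsto (fun r => ∫ a, min (F r a - N a) 0) (𝓝[>] (0 : ℝ))
      (𝓝 (∫ _ : ℝ, (0 : ℝ))) := by
    refine tendsto_integral_filter_of_dominated_convergence
      (fun a => (Icc (-(R + 1)) (R + 1)).indicator (fun _ => (m : ℝ)) a + N a)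
      (Eventually.of_forall fun r => (((hFint r).sub hNint).inf (integrable_zero _ _ _)).1)
      ?_ ?_ ?_
    · have hsmall := (tendsto_mul_nhdsGT_zero ε).eventually (gt_mem_nhds one_pos)
      filter_upwards [hsmall, self_mem_nhdsWithin] with r hr1 hr
      have hεr : 0 < ε * r := mul_pos hε hr
      filter_upwards [hgood] with a ha
      have hFa : |F r a| ≤ (Icc (-(R + 1)) (R + 1)).indicator (fun _ => (m : ℝ)) a := by
        by_cases hab : a ∈ Icc (-(R + 1)) (R + 1)
        · rw [indicator_of_mem hab, hF, abs_div, abs_of_pos hεr, div_le_iff₀ hεr]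
          exact (integrable_corner_slice hA hfr hεr.le ha.2).2
        · have hz : ∀ s, corner A (ε * r) r (a, s) = 0 := fun s =>
            corner_eq_zero_of_box hR hεr.le hr1.le
              (Or.inl (lt_of_not_ge fun hcon => hab (abs_le.1 hcon)))
          rw [indicator_of_notMem hab]
          simp [hF, hz]
      rw [Real.norm_eq_abs, abs_le]
      have := abs_le.1 hFa
      have := hN0 a
      constructor
      · exact le_min (by linarith) (by linarith)
      · exact (min_le_right _ _).trans (by linarith)
    · exact ((integrable_indicator_iff measurableSet_Icc).2
        (integrableOn_const measure_Icc_lt_top.ne)).add hNint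
    · filter_upwards [hgood] with a ha
      refine tendsto_const_nhds.congr' ?_
      filter_upwards [eventually_sum_le_integral_corner_slice hA hreg hpq hfr ha.1 ha.2 hε T,
        self_mem_nhdsWithin] with r hr hr0
      have hεr : 0 < ε * r := mul_pos hε hr0
      have : N a ≤ F r a := by
        rw [hF, le_div_iff₀ hεr]
        linarith
      rw [min_eq_right (by linarith)]
  rw [integral_zero] at hlim
  filter_upwards [hlim.eventually (lt_mem_nhds (neg_lt_zero.2 hη)), self_mem_nhdsWithin]
    with r hr hr0
  have hεr : 0 < ε * r := mul_pos hε hr0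
  have hmin : Integrable fun a => min (F r a - N a) 0 :=
    ((hFint r).sub hNint).inf (integrable_zero _ _ _)
  have hFN : Integrable fun a => F r a - N a := (hFint r).sub hNint
  have h1 : ∫ a, min (F r a - N a) 0 ≤ ∫ a, (F r a - N a) :=
    integral_mono hmin hFN fun a => min_le_left _ _
  rw [integral_sub (hFint r) hNint, hNsum, hFsum] at h1
  refine (le_div_iff₀' hεr).1 ?_
  linarith

/-- The points of a set lying on its upper edge at horizontal scale `r` and vertical scale `h`. -/
def upperEdge (K : Set (ℝ × ℝ)) (h r : ℝ) : Set (ℝ × ℝ) :=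
  {y | y ∈ K ∧ y + (r, 0) ∈ K ∧ y + (0, h) ∉ K ∧ y + (r, h) ∉ K}

/-- The reflection of a planar set in the horizontal axis. -/
def flip (K : Set (ℝ × ℝ)) : Set (ℝ × ℝ) := {y | (y.1, -y.2) ∈ K}

/-- The projection to the horizontal axis of the part of a set above height `s`. -/
def shadow (K : Set (ℝ × ℝ)) (s : ℝ) : Set ℝ := {a | ∃ s' ≥ s, (a, s') ∈ K}

lemma mem_flip {K : Set (ℝ × ℝ)} {y : ℝ × ℝ} : y ∈ flip K ↔ (y.1, -y.2) ∈ K := Iff.rfl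

lemma isCompact_flip {K : Set (ℝ × ℝ)} (hK : IsCompact K) : IsCompact (flip K) := by
  have : flip K = (fun y : ℝ × ℝ => (y.1, -y.2)) '' K := by
    ext y
    constructor
    · exact fun hy => ⟨_, hy, by simp⟩
    · rintro ⟨z, hz, rfl⟩
      simpa [mem_flip] using hz
  rw [this]
  exact hK.image (by fun_prop)

lemma convex_flip {K : Set (ℝ × ℝ)} (hK : Convex ℝ K) : Convex ℝ (flip K) := by
  intro x hx y hy a b ha hb hab
  have := hK hx hy ha hb hab
  rw [mem_flip]
  convert this using 1
  ext
  · simp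
  · simp only [Prod.snd_add, Prod.smul_snd, smul_eq_mul]
    ring

lemma len_flip (K : Set (ℝ × ℝ)) (s : ℝ) : len (flip K) (-s) = len K s := by
  have : slice (flip K) (-s) = slice K s := by
    ext r
    change (r, - -s) ∈ K ↔ (r, s) ∈ K
    rw [neg_neg]
  rw [len, this, len]

lemma corner_le_indicator (K : Set (ℝ × ℝ)) (h r : ℝ) (y : ℝ × ℝ) :
    corner K h r y ≤ (upperEdge K h r).indicator 1 y
      + ((fun z : ℝ × ℝ => (z.1, -z.2 - h)) ⁻¹' upperEdge (flip K) h r).indicator 1 y := by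
  have hflip : y ∈ (fun z : ℝ × ℝ => (z.1, -z.2 - h)) ⁻¹' upperEdge (flip K) h r ↔
      y + (0, h) ∈ K ∧ y + (r, h) ∈ K ∧ y ∉ K ∧ y + (r, 0) ∉ K := by
    obtain ⟨a, s⟩ := y
    change ((a, -(-s - h)) ∈ K ∧ (a + r, -(-s - h + 0)) ∈ K ∧ (a + 0, -(-s - h + h)) ∉ K ∧
      (a + r, -(-s - h + h)) ∉ K) ↔ (a + 0, s + h) ∈ K ∧ (a + r, s + h) ∈ K ∧ (a, s) ∉ K ∧
      (a + r, s + 0) ∉ K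
    simp only [add_zero, sub_add_cancel, neg_neg, neg_sub, sub_neg_eq_add, add_comm h s]
  have hup : y ∈ upperEdge K h r ↔ y ∈ K ∧ y + (r, 0) ∈ K ∧ y + (0, h) ∉ K ∧ y + (r, h) ∉ K :=
    Iff.rfl
  classical
  rw [indicator_apply, indicator_apply, hflip, hup]
  by_cases k1 : y ∈ K <;> by_cases k2 : y + (0, h) ∈ K <;> by_cases k3 : y + (r, 0) ∈ K <;>
    by_cases k4 : y + (r, h) ∈ K <;> simp [corner, ind, k1, k2, k3, k4]

lemma measurableSet_upperEdge {K : Set (ℝ × ℝ)} (hK : IsCompact K) (h r : ℝ) :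
    MeasurableSet (upperEdge K h r) :=
  hK.measurableSet.inter ((hK.measurableSet.preimage (measurable_add_const _)).inter
    ((hK.measurableSet.preimage (measurable_add_const _)).compl.inter
      (hK.measurableSet.preimage (measurable_add_const _)).compl))

lemma sub_le_of_mem_upperEdge {K : Set (ℝ × ℝ)} (hK : Convex ℝ K) {h r a s s' : ℝ} (hh : 0 ≤ h)
    (hs : (a, s) ∈ upperEdge K h r) (hs' : (a, s') ∈ upperEdge K h r) : s' - s ≤ h := by
  by_contra! hlt
  have hpos : 0 < s' - s := by linarith
  refine hs.2.2.1 ?_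
  have := hK hs.1 hs'.1 (a := 1 - h / (s' - s)) (b := h / (s' - s))
    (sub_nonneg.2 ((div_le_one hpos).2 hlt.le)) (by positivity) (by ring)
  convert this using 1
  ext
  · simp only [Prod.fst_add, Prod.smul_fst, smul_eq_mul]
    ring
  · simp only [Prod.snd_add, Prod.smul_snd, smul_eq_mul]
    field_simp
    ring

lemma mem_of_mem_of_le {K : Set (ℝ × ℝ)} (hK : Convex ℝ K) {a s t s' : ℝ} (h1 : (a, s) ∈ K)
    (h2 : (a, s') ∈ K) (hst : s ≤ t) (hts : t ≤ s') : (a, t) ∈ K := by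
  have hsl : Convex ℝ {t : ℝ | (a, t) ∈ K} := by
    intro x hx y hy u v hu hv huv
    have := hK hx hy hu hv huv
    change (a, u • x + v • y) ∈ K
    convert this using 1
    ext
    · simp only [Prod.fst_add, Prod.smul_fst, smul_eq_mul, ← add_mul, huv, one_mul]
    · simp
  exact hsl.ordConnected.out h1 h2 ⟨hst, hts⟩

lemma upperEdge_height {K : Set (ℝ × ℝ)} (hK : Convex ℝ K) {ε r β c D : ℝ} (hε : 0 < ε)
    (hr : 0 < r) (hβ : ∀ x ∈ K, x.2 ≤ β) (hc : (c, β) ∈ K) (hD : ∀ x ∈ K, ∀ y ∈ K, x.1 - y.1 ≤ D)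
    {a s : ℝ} (hy : (a, s) ∈ upperEdge K (ε * r) r) :
    a ∈ shadow K (β - ε * D) ∪ Icc (c - r) c := by
  obtain ⟨h1, h2, h3, h4⟩ := hy
  have h2' : (a + r, s) ∈ K := by simpa using h2
  have hs : s ≤ β := hβ _ h1
  have hcomb : ∀ x y z u v w t : ℝ, (x, y) ∈ K → (z, w) ∈ K → 0 ≤ t → t ≤ 1 →
      u = x + t * (z - x) → v = y + t * (w - y) → (u, v) ∈ K := by
    rintro x y z u v w t hx hz ht0 ht1 rfl rfl
    have := hK hx hz (a := 1 - t) (b := t) (by linarith) ht0 (by ring)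
    convert this using 1
    ext
    · simp only [Prod.fst_add, Prod.smul_fst, smul_eq_mul]
      ring
    · simp only [Prod.snd_add, Prod.smul_snd, smul_eq_mul]
      ring
  by_cases hc1 : c < a
  · left
    refine ⟨s, ?_, h1⟩
    have hpos : 0 < a + r - c := by linarith
    have hDD : a + r - c ≤ D := hD _ h2' _ hc
    have hmem : (a, s + r / (a + r - c) * (β - s)) ∈ K :=
      hcomb _ _ _ _ _ _ (r / (a + r - c)) h2' hc (by positivity)
        ((div_le_one hpos).2 (by linarith)) (by field_simp; ring) rfl
    have hlt : r / (a + r - c) * (β - s) < ε * r := by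
      by_contra! hge
      refine h3 ?_
      have := mem_of_mem_of_le hK h1 hmem (t := s + ε * r) (by linarith [mul_pos hε hr])
        (by linarith)
      simpa using this
    rw [div_mul_eq_mul_div, div_lt_iff₀ hpos] at hlt
    have : β - s < ε * (a + r - c) := lt_of_mul_lt_mul_left (by linarith) hr.le
    have := mul_le_mul_of_nonneg_left hDD hε.le
    linarith
  by_cases hc2 : a + r < c
  · left
    refine ⟨s, ?_, h1⟩
    have hpos : 0 < c - a := by linarith
    have hDD : c - a ≤ D := hD _ hc _ h1
    have hmem : (a + r, s + r / (c - a) * (β - s)) ∈ K :=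
      hcomb _ _ _ _ _ _ (r / (c - a)) h1 hc (by positivity)
        ((div_le_one hpos).2 (by linarith)) (by field_simp) rfl
    have hlt : r / (c - a) * (β - s) < ε * r := by
      by_contra! hge
      refine h4 ?_
      have := mem_of_mem_of_le hK h2' hmem (t := s + ε * r) (by linarith [mul_pos hε hr])
        (by linarith)
      simpa using this
    rw [div_mul_eq_mul_div, div_lt_iff₀ hpos] at hlt
    have : β - s < ε * (c - a) := lt_of_mul_lt_mul_left (by linarith) hr.le
    have := mul_le_mul_of_nonneg_left hDD hε.le
    linarith
  · right
    exact ⟨by linarith, by linarith⟩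

lemma isCompact_shadow {K : Set (ℝ × ℝ)} (hK : IsCompact K) (s : ℝ) : IsCompact (shadow K s) := by
  have : shadow K s = Prod.fst '' (K ∩ {x | s ≤ x.2}) := by
    ext a
    constructor
    · rintro ⟨s', hs', h⟩
      exact ⟨_, ⟨h, hs'⟩, rfl⟩
    · rintro ⟨x, ⟨hx, hs⟩, rfl⟩
      exact ⟨x.2, hs, hx⟩
  rw [this]
  exact (hK.inter_right (isClosed_le continuous_const continuous_snd)).image continuous_fst

lemma volume_real_le_of_slices {E : Set (ℝ × ℝ)} {P : Set ℝ} {h : ℝ} (hE : MeasurableSet E)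
    (hP : MeasurableSet P) (hPfin : volume P ≠ ⊤) (hh : 0 ≤ h)
    (hs : ∀ a s s', (a, s) ∈ E → (a, s') ∈ E → s' - s ≤ h) (hEP : ∀ a s, (a, s) ∈ E → a ∈ P) :
    volume.real E ≤ h * volume.real P := by
  have hle : volume E ≤ ENNReal.ofReal h * volume P := by
    calc volume E = ∫⁻ a, volume (Prod.mk a ⁻¹' E) := Measure.prod_apply hE
      _ ≤ ∫⁻ a, P.indicator (fun _ => ENNReal.ofReal h) a := by
        refine lintegral_mono fun a => ?_
        by_cases ha : a ∈ P
        · rw [indicator_of_mem ha]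
          refine (Real.volume_le_diam _).trans (Metric.ediam_le fun s h1 s' h2 => ?_)
          rw [edist_dist, Real.dist_eq]
          exact ENNReal.ofReal_le_ofReal (abs_sub_le_iff.2 ⟨hs _ _ _ h2 h1, hs _ _ _ h1 h2⟩)
        · have : Prod.mk a ⁻¹' E = ∅ := eq_empty_of_forall_notMem fun s hs => ha (hEP a s hs)
          simp [this]
      _ = ENNReal.ofReal h * volume P := by
        rw [lintegral_indicator hP, setLIntegral_const]
  have := ENNReal.toReal_mono (ENNReal.mul_ne_top ENNReal.ofReal_ne_top hPfin) hle
  rwa [ENNReal.toReal_mul, ENNReal.toReal_ofReal hh] at this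

lemma volume_upperEdge_le {K : Set (ℝ × ℝ)} (hKc : IsCompact K) (hK : Convex ℝ K)
    {ε r β c D : ℝ} (hε : 0 < ε) (hr : 0 < r) (hβ : ∀ x ∈ K, x.2 ≤ β) (hc : (c, β) ∈ K)
    (hD : ∀ x ∈ K, ∀ y ∈ K, x.1 - y.1 ≤ D) :
    volume.real (upperEdge K (ε * r) r) ≤ ε * r * (volume.real (shadow K (β - ε * D)) + r) := by
  have hSc := isCompact_shadow hKc (β - ε * D)
  have hP : IsCompact (shadow K (β - ε * D) ∪ Icc (c - r) c) := hSc.union isCompact_Icc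
  refine (volume_real_le_of_slices (measurableSet_upperEdge hKc _ _) hP.measurableSet
    hP.measure_lt_top.ne (mul_pos hε hr).le
    (fun a s s' h1 h2 => sub_le_of_mem_upperEdge hK (mul_pos hε hr).le h1 h2)
    (fun a s h => upperEdge_height hK hε hr hβ hc hD h)).trans ?_
  refine mul_le_mul_of_nonneg_left ((measureReal_union_le _ _).trans ?_) (mul_pos hε hr).le
  rw [Real.volume_real_Icc_of_le (by linarith)]
  linarith

lemma integral_corner_le {K : Set (ℝ × ℝ)} (hKc : IsCompact K) (hK : Convex ℝ K)
    {ε r α β c d D : ℝ} (hε : 0 < ε) (hr : 0 < r) (hβ : ∀ x ∈ K, x.2 ≤ β) (hc : (c, β) ∈ K)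
    (hα : ∀ x ∈ K, α ≤ x.2) (hd : (d, α) ∈ K) (hD : ∀ x ∈ K, ∀ y ∈ K, x.1 - y.1 ≤ D) :
    ∫ y, corner K (ε * r) r y ≤ ε * r * (volume.real (shadow K (β - ε * D))
      + volume.real (shadow (flip K) (-α - ε * D)) + 2 * r) := by
  have h1 := volume_upperEdge_le hKc hK hε hr hβ hc hD
  have h2 := volume_upperEdge_le (isCompact_flip hKc) (convex_flip hK) (β := -α) (c := d) (D := D)
    hε hr (fun x hx => by linarith [hα _ hx]) (by simpa [mem_flip] using hd)
    (fun x hx y hy => hD _ (mem_flip.1 hx) (y.1, -y.2) hy)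
  have hmp : MeasurePreserving (fun z : ℝ × ℝ => (z.1, -z.2 - ε * r)) :=
    (MeasurePreserving.id volume).prod
      ((measurePreserving_sub_right volume (ε * r)).comp (Measure.measurePreserving_neg volume))
  have hm1 := measurableSet_upperEdge hKc (ε * r) r
  have hm2 := measurableSet_upperEdge (isCompact_flip hKc) (ε * r) r
  have hf1 : volume (upperEdge K (ε * r) r) ≠ ⊤ :=
    measure_ne_top_of_subset (fun y hy => hy.1) hKc.measure_lt_top.ne
  have hf2 : volume (upperEdge (flip K) (ε * r) r) ≠ ⊤ :=
    measure_ne_top_of_subset (fun y hy => hy.1) (isCompact_flip hKc).measure_lt_top.ne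
  have hv2 := hmp.measureReal_preimage hm2.nullMeasurableSet
  have hf2' := hf2
  rw [← hmp.measure_preimage hm2.nullMeasurableSet] at hf2'
  have hm2' := hmp.measurable hm2
  have hi1 : Integrable ((upperEdge K (ε * r) r).indicator (1 : ℝ × ℝ → ℝ)) :=
    (integrable_indicator_iff hm1).2 (integrableOn_const hf1)
  have hi2 : Integrable (((fun z : ℝ × ℝ => (z.1, -z.2 - ε * r)) ⁻¹'
      upperEdge (flip K) (ε * r) r).indicator (1 : ℝ × ℝ → ℝ)) :=
    (integrable_indicator_iff hm2').2 (integrableOn_const hf2')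
  have := integral_mono (integrable_corner hKc (ε * r) r) (hi1.add hi2)
    (corner_le_indicator K (ε * r) r)
  rw [integral_add' hi1 hi2, integral_indicator_one hm1, integral_indicator_one hm2', hv2] at this
  linarith

lemma tendsto_volume_shadow {K : Set (ℝ × ℝ)} (hK : IsCompact K) {β D : ℝ}
    (hβ : ∀ x ∈ K, x.2 ≤ β) (hD : 0 ≤ D) :
    Tendsto (fun k : ℕ => volume.real (shadow K (β - 1 / ((k : ℝ) + 1) * D))) atTop
      (𝓝 (len K β)) := by
  have hInter : ⋂ k : ℕ, shadow K (β - 1 / ((k : ℝ) + 1) * D) = slice K β := by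
    ext a
    constructor
    · intro ha
      choose s hs hsK using mem_iInter.1 ha
      have hlim : Tendsto s atTop (𝓝 β) := by
        refine tendsto_of_tendsto_of_tendsto_of_le_of_le ?_ tendsto_const_nhds hs
          (fun k => hβ _ (hsK k))
        have := (tendsto_one_div_add_atTop_nhds_zero_nat (𝕜 := ℝ)).mul_const D
        simpa using this.const_sub β
      exact hK.isClosed.mem_of_tendsto (tendsto_const_nhds.prodMk_nhds hlim)
        (Eventually.of_forall hsK)
    · intro ha
      refine mem_iInter.2 fun k => ⟨β, ?_, ha⟩
      have : 0 ≤ 1 / ((k : ℝ) + 1) * D := by positivity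
      linarith
  have hanti : Antitone fun k : ℕ => shadow K (β - 1 / ((k : ℝ) + 1) * D) := by
    rintro j k hjk a ⟨s, hs, hsK⟩
    refine ⟨s, ?_, hsK⟩
    have := mul_le_mul_of_nonneg_right (Nat.one_div_le_one_div (α := ℝ) hjk) hD
    linarith
  have := tendsto_measure_iInter_atTop (μ := volume)
    (fun k : ℕ => (isCompact_shadow hK (β - 1 / ((k : ℝ) + 1) * D)).measurableSet.nullMeasurableSet)
    hanti ⟨0, (isCompact_shadow hK _).measure_lt_top.ne⟩
  rw [hInter] at this
  exact (ENNReal.tendsto_toReal (isCompact_slice hK β).measure_lt_top.ne).comp this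

lemma sum_len_le {A K : Set (ℝ × ℝ)} (hA : IsCompact A) (hreg : A = closure (interior A)) {m : ℕ}
    {p q : Fin m → ℝ × ℝ} (hpq : ∀ i, p i ≠ q i)
    (hfr : frontier A = ⋃ i, segment ℝ (p i) (q i)) (hKc : IsCompact K) (hK : Convex ℝ K)
    (hcov : ∀ x, cov A x = cov K x) {α β c d : ℝ} (hβ : ∀ x ∈ K, x.2 ≤ β) (hc : (c, β) ∈ K)
    (hα : ∀ x ∈ K, α ≤ x.2) (hd : (d, α) ∈ K) (T : Finset ℝ) :
    ∑ s ∈ T, len (horiz p q) s ≤ len K β + len K α := by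
  obtain ⟨R, hR0, hR⟩ := exists_box hKc
  have hD : ∀ x ∈ K, ∀ y ∈ K, x.1 - y.1 ≤ 2 * R := fun x hx y hy => by
    linarith [abs_le.1 (hR x hx).1, abs_le.1 (hR y hy).1]
  have hstep : ∀ ε > 0, ∑ s ∈ T, len (horiz p q) s ≤ volume.real (shadow K (β - ε * (2 * R)))
      + volume.real (shadow (flip K) (-α - ε * (2 * R))) := by
    intro ε hε
    refine le_of_forall_pos_le_add fun η hη => ?_
    have hev := eventually_sum_len_le_integral_corner hA hreg hpq hfr hε (half_pos hη) T
    obtain ⟨r, hr, hr0⟩ := (hev.and (Ioo_mem_nhdsGT (by positivity : (0 : ℝ) < η / 4))).exists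
    have hεr : 0 < ε * r := mul_pos hε hr0.1
    rw [integral_corner hA, hcov, hcov, hcov, ← integral_corner hKc] at hr
    have := le_of_mul_le_mul_left (hr.trans (integral_corner_le hKc hK hε hr0.1 hβ hc hα hd hD)) hεr
    linarith [hr0.2]
  have h1 := tendsto_volume_shadow hKc hβ (D := 2 * R) (by positivity)
  have h2 := tendsto_volume_shadow (isCompact_flip hKc) (β := -α)
    (fun x hx => by linarith [hα _ hx]) (D := 2 * R) (by positivity)
  rw [len_flip] at h2
  exact ge_of_tendsto' (h1.add h2) fun k => hstep _ (by positivity)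

lemma abs_len_sub_le {A : Set (ℝ × ℝ)} (hA : IsCompact A) {m : ℕ} {p q : Fin m → ℝ × ℝ}
    (hfr : frontier A = ⋃ i, segment ℝ (p i) (q i)) {T : Finset ℝ} (hT : ∀ i, (p i).2 ∈ T)
    {t : ℝ} (ht : 0 ≤ t) (s : ℝ) :
    |len A s - len A (s + t)| ≤ (∑ i, 2 * |(q i - p i).1 / (q i - p i).2|) * t
      + ∑ s' ∈ T, (Icc s (s + t)).indicator (len (horiz p q)) s' := by
  classical
  set k : Fin m → ℝ := fun i => (q i - p i).1 / (q i - p i).2 with hk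
  set U : Set ℝ := ⋃ i, Icc ((p i).1 + (s - (p i).2) * k i - |k i| * t)
    ((p i).1 + (s - (p i).2) * k i + |k i| * t) with hU
  set V : Set ℝ := ⋃ s' ∈ T.filter (· ∈ Icc s (s + t)), slice (horiz p q) s' with hV
  have hsub : symmDiff (slice A s) (slice A (s + t)) ⊆ U ∪ V := by
    intro a ha
    have hne : ind A (a, s) ≠ ind A (a, s + t) := by
      rcases ha with ⟨h1, h2⟩ | ⟨h1, h2⟩
      · rw [ind_of_mem (show (a, s) ∈ A from h1), ind_of_notMem (show (a, s + t) ∉ A from h2)]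
        exact one_ne_zero
      · rw [ind_of_notMem (show (a, s) ∉ A from h2), ind_of_mem (show (a, s + t) ∈ A from h1)]
        exact zero_ne_one
    obtain ⟨i, s', hs', hi⟩ := exists_mem_segment_of_ind_ne hfr ht hne
    obtain ⟨θ, -, -, h1, h2⟩ := exists_param_of_mem_segment hi
    simp only at h1 h2
    by_cases hd : (q i - p i).2 = 0
    · right
      rw [hd, mul_zero, add_zero] at h2
      refine mem_iUnion₂.2 ⟨s', Finset.mem_filter.2 ⟨h2 ▸ hT i, hs'⟩, i, ?_, hi⟩
      rw [Prod.snd_sub] at hd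
      linarith
    · left
      refine mem_iUnion.2 ⟨i, ?_⟩
      have hak : a - ((p i).1 + (s - (p i).2) * k i) = k i * (s' - s) := by
        rw [h1, h2, hk]
        field_simp
        ring
      have habs : |a - ((p i).1 + (s - (p i).2) * k i)| ≤ |k i| * t := by
        rw [hak, abs_mul]
        refine mul_le_mul_of_nonneg_left ?_ (abs_nonneg _)
        rw [abs_of_nonneg (by linarith [hs'.1])]
        linarith [hs'.2]
      obtain ⟨h3, h4⟩ := abs_le.1 habs
      exact ⟨by linarith, by linarith⟩
  have hUc : IsCompact U := isCompact_iUnion fun i => isCompact_Icc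
  have hVc : IsCompact V := (Finset.finite_toSet _).isCompact_biUnion
    fun s' _ => isCompact_slice (isCompact_horiz p q) s'
  have hUle : volume.real U ≤ (∑ i, 2 * |k i|) * t := by
    refine (measureReal_iUnion_fintype_le _).trans ?_
    rw [Finset.sum_mul]
    refine Finset.sum_le_sum fun i _ => ?_
    rw [Real.volume_real_Icc_of_le (by nlinarith [abs_nonneg (k i)])]
    linarith
  have hVle : volume.real V ≤ ∑ s' ∈ T, (Icc s (s + t)).indicator (len (horiz p q)) s' := by
    refine (measureReal_biUnion_finset_le _ _).trans ?_
    rw [Finset.sum_filter]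
    refine Finset.sum_le_sum fun s' _ => ?_
    rw [indicator_apply, len]
  calc |len A s - len A (s + t)| ≤ volume.real (symmDiff (slice A s) (slice A (s + t))) :=
        abs_measureReal_sub_le_measureReal_symmDiff'
          (isCompact_slice hA s).measurableSet.nullMeasurableSet
          (isCompact_slice hA (s + t)).measurableSet.nullMeasurableSet
          (isCompact_slice hA s).measure_lt_top.ne (isCompact_slice hA (s + t)).measure_lt_top.ne
    _ ≤ volume.real (U ∪ V) := measureReal_mono hsub (hUc.union hVc).measure_lt_top.ne
    _ ≤ volume.real U + volume.real V := measureReal_union_le _ _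
    _ ≤ _ := add_le_add hUle hVle

lemma sum_indicator_le {T : Finset ℝ} {I : Set ℝ} {f : ℝ → ℝ} {x : ℝ} (hf : ∀ s, 0 ≤ f s)
    (h : ∀ s ∈ T, s ≠ x → s ∉ I) : ∑ s ∈ T, I.indicator f s ≤ f x := by
  by_cases hx : x ∈ T
  · rw [Finset.sum_eq_single x (fun s hs hne => indicator_of_notMem (h s hs hne) _)
      (fun h => absurd hx h)]
    exact indicator_le_self' (fun _ _ => hf x) x
  · rw [Finset.sum_eq_zero fun s hs =>
      indicator_of_notMem (h s hs (fun hsx => hx (hsx ▸ hs))) _]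
    exact hf x

lemma eventually_forall_mul_lt_abs_sub (T : Finset ℝ) (c x : ℝ) :
    ∀ᶠ t in 𝓝[>] (0 : ℝ), ∀ s ∈ T, s ≠ x → c * t < |s - x| := by
  rw [eventually_all_finset]
  intro s _
  by_cases hne : s = x
  · exact Eventually.of_forall fun t h => absurd hne h
  · exact ((tendsto_mul_nhdsGT_zero c).eventually
      (gt_mem_nhds (abs_pos.2 (sub_ne_zero.2 hne)))).mono fun t ht _ => ht

lemma integral_sq_len_sub_le {A : Set (ℝ × ℝ)} (hA : IsCompact A) {m : ℕ} {p q : Fin m → ℝ × ℝ}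
    (hfr : frontier A = ⋃ i, segment ℝ (p i) (q i)) {T : Finset ℝ} (hT : ∀ i, (p i).2 ∈ T) :
    ∃ C : ℝ, ∀ᶠ t in 𝓝[>] (0 : ℝ), ∫ s, (len A s - len A (s + t)) ^ 2
      ≤ t * (∑ s ∈ T, len (horiz p q) s ^ 2 + C * t) := by
  obtain ⟨R, hR0, hR⟩ := exists_box hA
  set C : ℝ := ∑ i, 2 * |(q i - p i).1 / (q i - p i).2| with hC
  have hC0 : 0 ≤ C := Finset.sum_nonneg fun i _ => by positivity
  set Λ : ℝ → ℝ := len (horiz p q) with hΛ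
  have hΛ0 : ∀ s, 0 ≤ Λ s := len_nonneg _
  refine ⟨2 * (R + 1) * C ^ 2 + 2 * C * ∑ s ∈ T, Λ s, ?_⟩
  have hsep : ∀ᶠ t in 𝓝[>] (0 : ℝ), ∀ x ∈ T, ∀ s ∈ T, s ≠ x → 1 * t < |s - x| := by
    rw [eventually_all_finset]
    exact fun x _ => eventually_forall_mul_lt_abs_sub T 1 x
  filter_upwards [hsep, Ioo_mem_nhdsGT one_pos] with t hsep ht
  have hpt : ∀ s, (len A s - len A (s + t)) ^ 2 ≤
      (Icc (-(R + 1)) (R + 1)).indicator (fun _ => C ^ 2 * t ^ 2) s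
      + ∑ s' ∈ T, (Icc (s' - t) s').indicator (fun _ => 2 * C * t * Λ s' + Λ s' ^ 2) s := by
    intro s
    have hsum0 : 0 ≤ ∑ s' ∈ T, (Icc (s' - t) s').indicator
        (fun _ => 2 * C * t * Λ s' + Λ s' ^ 2) s :=
      Finset.sum_nonneg fun s' _ => indicator_nonneg (fun _ _ => by
        have := hΛ0 s'
        have := ht.1
        positivity) s
    by_cases hs : s ∈ Icc (-(R + 1)) (R + 1)
    · rw [indicator_of_mem hs, ← sq_abs]
      have h1 := abs_len_sub_le hA hfr hT ht.1.le s
      by_cases hex : ∃ s' ∈ T, s' ∈ Icc s (s + t)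
      · obtain ⟨s', hs'T, hs'⟩ := hex
        have h2 : ∑ s' ∈ T, (Icc s (s + t)).indicator Λ s' ≤ Λ s' := by
          refine sum_indicator_le hΛ0 fun x hx hne hxI => ?_
          have := hsep s' hs'T x hx hne
          rcases lt_abs.1 this with h | h <;> linarith [hxI.1, hxI.2, hs'.1, hs'.2]
        have h3 : 2 * C * t * Λ s' + Λ s' ^ 2 ≤ ∑ s' ∈ T, (Icc (s' - t) s').indicator
            (fun _ => 2 * C * t * Λ s' + Λ s' ^ 2) s := by
          refine le_trans (le_of_eq ?_) (Finset.single_le_sum (fun x _ => ?_) hs'T)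
          · rw [indicator_of_mem (show s ∈ Icc (s' - t) s' from ⟨by linarith [hs'.2], hs'.1⟩)]
          · exact indicator_nonneg (fun _ _ => by
              have := hΛ0 x
              have := ht.1
              positivity) s
        calc |len A s - len A (s + t)| ^ 2 ≤ (C * t + Λ s') ^ 2 :=
              pow_le_pow_left₀ (abs_nonneg _) (h1.trans (by linarith)) 2
          _ = C ^ 2 * t ^ 2 + (2 * C * t * Λ s' + Λ s' ^ 2) := by ring
          _ ≤ _ := by linarith
      · have h2 : ∑ s' ∈ T, (Icc s (s + t)).indicator Λ s' = 0 :=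
          Finset.sum_eq_zero fun s' hs' => indicator_of_notMem (fun h => hex ⟨s', hs', h⟩) _
        rw [h2, add_zero] at h1
        calc |len A s - len A (s + t)| ^ 2 ≤ (C * t) ^ 2 :=
              pow_le_pow_left₀ (abs_nonneg _) h1 2
          _ ≤ _ := by linarith [mul_pow C t 2]
    · have hzero : ∀ u, 0 ≤ u → u ≤ 1 → len A (s + u) = 0 := fun u hu hu1 =>
        len_eq_zero fun x hx hxs => hs (by
          have := abs_le.1 (hR x hx).2
          exact ⟨by linarith, by linarith⟩)
      have h1 := hzero 0 le_rfl zero_le_one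
      rw [add_zero] at h1
      rw [h1, hzero t ht.1.le ht.2.le, indicator_of_notMem hs]
      simpa using hsum0
  have hi : ∀ (a b c : ℝ), Integrable ((Icc a b).indicator fun _ : ℝ => c) := fun a b c =>
    (integrable_indicator_iff measurableSet_Icc).2 (integrableOn_const measure_Icc_lt_top.ne)
  have hi1 := hi (-(R + 1)) (R + 1) (C ^ 2 * t ^ 2)
  have hi2 : ∀ s' ∈ T, Integrable fun s =>
      (Icc (s' - t) s').indicator (fun _ => 2 * C * t * Λ s' + Λ s' ^ 2) s := fun s' _ => hi _ _ _
  have hii : ∀ (a b c : ℝ), a ≤ b → ∫ s, (Icc a b).indicator (fun _ : ℝ => c) s = (b - a) * c :=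
    fun a b c hab => by
      rw [integral_indicator_const _ measurableSet_Icc, Real.volume_real_Icc_of_le hab, smul_eq_mul]
  calc ∫ s, (len A s - len A (s + t)) ^ 2
      ≤ ∫ s, ((Icc (-(R + 1)) (R + 1)).indicator (fun _ => C ^ 2 * t ^ 2) s
      + ∑ s' ∈ T, (Icc (s' - t) s').indicator (fun _ => 2 * C * t * Λ s' + Λ s' ^ 2) s) :=
        integral_mono_of_nonneg (Eventually.of_forall fun s => sq_nonneg _)
          (hi1.add (integrable_finsetSum T hi2)) (Eventually.of_forall hpt)
    _ = t * (∑ s ∈ T, Λ s ^ 2 + (2 * (R + 1) * C ^ 2 + 2 * C * ∑ s ∈ T, Λ s) * t) := by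
        rw [integral_add hi1 (integrable_finsetSum T hi2), integral_finsetSum T hi2,
          hii _ _ _ (by linarith), Finset.sum_congr rfl fun s' _ => hii _ _ _
            (show s' - t ≤ s' by linarith [ht.1])]
        have : ∑ s' ∈ T, (s' - (s' - t)) * (2 * C * t * Λ s' + Λ s' ^ 2)
            = 2 * C * t ^ 2 * ∑ s ∈ T, Λ s + t * ∑ s ∈ T, Λ s ^ 2 := by
          clear_value C
          rw [Finset.mul_sum, Finset.mul_sum, ← Finset.sum_add_distrib]
          exact Finset.sum_congr rfl fun s' _ => by ring
        rw [this]
        ring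

lemma integral_len_mul_le {A : Set (ℝ × ℝ)} (hA : IsCompact A) {m : ℕ} {p q : Fin m → ℝ × ℝ}
    (hfr : frontier A = ⋃ i, segment ℝ (p i) (q i)) {T : Finset ℝ} (hT : ∀ i, (p i).2 ∈ T)
    {α β : ℝ} (hα : ∀ x ∈ A, α ≤ x.2) (hβ : ∀ x ∈ A, x.2 ≤ β) :
    ∃ C : ℝ, ∀ᶠ t in 𝓝[>] (0 : ℝ), ∫ s, len A s * len A (s + (β - α - t))
      ≤ t * ((C * t + len (horiz p q) α) * (C * t + len (horiz p q) β)) := by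
  set C : ℝ := ∑ i, 2 * |(q i - p i).1 / (q i - p i).2| with hC
  have hC0 : 0 ≤ C := Finset.sum_nonneg fun i _ => by positivity
  refine ⟨C * 2, ?_⟩
  filter_upwards [eventually_forall_mul_lt_abs_sub T 2 α, eventually_forall_mul_lt_abs_sub T 2 β,
    self_mem_nhdsWithin] with t h1 h2 ht
  rw [mem_Ioi] at ht
  have hpt : ∀ s, len A s * len A (s + (β - α - t)) ≤ (Icc α (α + t)).indicator
      (fun _ => (C * 2 * t + len (horiz p q) α) * (C * 2 * t + len (horiz p q) β)) s := by
    intro s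
    by_cases hs : s ∈ Icc α (α + t)
    · rw [indicator_of_mem hs]
      have k1 := abs_len_sub_le hA hfr hT (mul_pos two_pos ht).le (s - 2 * t)
      rw [sub_add_cancel, len_eq_zero (s := s - 2 * t) fun x hx hxs => by
        linarith [hα x hx, hs.2], zero_sub, abs_neg, abs_of_nonneg (len_nonneg _ _)] at k1
      have k2 := abs_len_sub_le hA hfr hT (mul_pos two_pos ht).le (s + (β - α - t))
      rw [len_eq_zero (s := s + (β - α - t) + 2 * t) fun x hx hxs => by
        linarith [hβ x hx, hs.1], sub_zero, abs_of_nonneg (len_nonneg _ _)] at k2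
      have k3 : ∑ s' ∈ T, (Icc (s - 2 * t) s).indicator (len (horiz p q)) s'
          ≤ len (horiz p q) α := sum_indicator_le (len_nonneg _) fun x hx hne hxI => by
        rcases lt_abs.1 (h1 x hx hne) with h | h <;> linarith [hxI.1, hxI.2, hs.1, hs.2]
      have k4 : ∑ s' ∈ T, (Icc (s + (β - α - t)) (s + (β - α - t) + 2 * t)).indicator
          (len (horiz p q)) s' ≤ len (horiz p q) β :=
        sum_indicator_le (len_nonneg _) fun x hx hne hxI => by
          rcases lt_abs.1 (h2 x hx hne) with h | h <;> linarith [hxI.1, hxI.2, hs.1, hs.2]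
      have := len_nonneg (horiz p q) α
      exact mul_le_mul (by linarith) (by linarith) (len_nonneg _ _) (by positivity)
    · rw [indicator_of_notMem hs]
      refine le_of_eq (mul_eq_zero.2 ?_)
      by_cases hsα : s < α
      · exact Or.inl (len_eq_zero fun x hx hxs => by linarith [hα x hx])
      · refine Or.inr (len_eq_zero fun x hx hxs => hs ⟨by linarith, ?_⟩)
        linarith [hβ x hx]
  calc ∫ s, len A s * len A (s + (β - α - t)) ≤ ∫ s, (Icc α (α + t)).indicator
          (fun _ => (C * 2 * t + len (horiz p q) α) * (C * 2 * t + len (horiz p q) β)) s :=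
        integral_mono_of_nonneg (Eventually.of_forall fun s => mul_nonneg (len_nonneg _ _)
          (len_nonneg _ _)) ((integrable_indicator_iff measurableSet_Icc).2
            (integrableOn_const measure_Icc_lt_top.ne)) (Eventually.of_forall hpt)
    _ = _ := by
      rw [integral_indicator_const _ measurableSet_Icc, Real.volume_real_Icc_of_le (by linarith),
        smul_eq_mul, add_sub_cancel_left]

lemma convex_slice {K : Set (ℝ × ℝ)} (hK : Convex ℝ K) (s : ℝ) : Convex ℝ (slice K s) := by
  intro x hx y hy u v hu hv huv
  have := hK hx hy hu hv huv
  change (u • x + v • y, s) ∈ K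
  convert this using 1
  ext
  · simp
  · simp only [Prod.snd_add, Prod.smul_snd, smul_eq_mul, ← add_mul, huv, one_mul]

lemma slice_eq_Icc {K : Set (ℝ × ℝ)} (hKc : IsCompact K) (hK : Convex ℝ K) {s c : ℝ}
    (hc : (c, s) ∈ K) : ∃ x y, x ≤ y ∧ slice K s = Icc x y := by
  have h := eq_Icc_of_connected_compact (s := slice K s)
    ⟨⟨c, hc⟩, (convex_slice hK s).isPreconnected⟩ (isCompact_slice hKc s)
  have hc' : c ∈ slice K s := hc
  rw [h] at hc'
  exact ⟨_, _, hc'.1.trans hc'.2, h⟩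

lemma le_len_of_convex {K : Set (ℝ × ℝ)} (hKc : IsCompact K) (hK : Convex ℝ K) {α β c d l : ℝ}
    (hc : (c, β) ∈ K) (hd : (d, α) ∈ K) (hl0 : 0 ≤ l) (hl1 : l ≤ 1) :
    (1 - l) * len K α + l * len K β ≤ len K ((1 - l) * α + l * β) := by
  obtain ⟨x, y, hxy, h1⟩ := slice_eq_Icc hKc hK hd
  obtain ⟨x', y', hxy', h2⟩ := slice_eq_Icc hKc hK hc
  have hcomb : ∀ u ∈ slice K α, ∀ v ∈ slice K β,
      (1 - l) * u + l * v ∈ slice K ((1 - l) * α + l * β) := by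
    intro u hu v hv
    have := hK hu hv (sub_nonneg.2 hl1) hl0 (by ring)
    change ((1 - l) * u + l * v, (1 - l) * α + l * β) ∈ K
    simpa using this
  have hx := hcomb x (h1 ▸ left_mem_Icc.2 hxy) x' (h2 ▸ left_mem_Icc.2 hxy')
  have hy := hcomb y (h1 ▸ right_mem_Icc.2 hxy) y' (h2 ▸ right_mem_Icc.2 hxy')
  have hsub := (convex_slice hK ((1 - l) * α + l * β)).ordConnected.out hx hy
  have hle := measureReal_mono hsub (isCompact_slice hKc _).measure_lt_top.ne (μ := volume)
  have hm1 := mul_le_mul_of_nonneg_left hxy (sub_nonneg.2 hl1)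
  have hm2 := mul_le_mul_of_nonneg_left hxy' hl0
  rw [Real.volume_real_Icc_of_le (by linarith)] at hle
  rw [len, len, h1, h2, Real.volume_real_Icc_of_le hxy, Real.volume_real_Icc_of_le hxy']
  refine le_trans (le_of_eq ?_) hle
  ring

lemma le_len_near_bot {K : Set (ℝ × ℝ)} (hKc : IsCompact K) (hK : Convex ℝ K) {α β c d t s : ℝ}
    (hc : (c, β) ∈ K) (hd : (d, α) ∈ K) (htw : t < β - α) (hs : s ∈ Icc α (α + t)) :
    (1 - t / (β - α)) * len K α ≤ len K s := by
  have hw : 0 < β - α := by linarith [hs.1, hs.2]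
  have h0 : 0 ≤ (s - α) / (β - α) := div_nonneg (by linarith [hs.1]) hw.le
  have h1 : (s - α) / (β - α) ≤ t / (β - α) :=
    div_le_div_of_nonneg_right (by linarith [hs.2]) hw.le
  have h2 : t / (β - α) ≤ 1 := (div_le_one hw).2 htw.le
  have := le_len_of_convex hKc hK hc hd h0 (h1.trans h2)
  rw [show (1 - (s - α) / (β - α)) * α + (s - α) / (β - α) * β = s by field_simp; ring] at this
  nlinarith [len_nonneg K α, len_nonneg K β, mul_nonneg h0 (len_nonneg K β),
    mul_le_mul_of_nonneg_right h1 (len_nonneg K α)]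

lemma le_len_near_top {K : Set (ℝ × ℝ)} (hKc : IsCompact K) (hK : Convex ℝ K) {α β c d t s : ℝ}
    (hc : (c, β) ∈ K) (hd : (d, α) ∈ K) (htw : t < β - α) (hs : s ∈ Icc (β - t) β) :
    (1 - t / (β - α)) * len K β ≤ len K s := by
  have hw : 0 < β - α := by linarith [hs.1, hs.2]
  have h1 : 1 - t / (β - α) ≤ (s - α) / (β - α) := by
    rw [one_sub_div hw.ne']
    exact div_le_div_of_nonneg_right (by linarith [hs.1]) hw.le
  have h2 : (s - α) / (β - α) ≤ 1 := (div_le_one hw).2 (by linarith [hs.2])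
  have h3 : t / (β - α) ≤ 1 := (div_le_one hw).2 htw.le
  have := le_len_of_convex hKc hK hc hd (by linarith) h2
  rw [show (1 - (s - α) / (β - α)) * α + (s - α) / (β - α) * β = s by field_simp; ring] at this
  nlinarith [len_nonneg K α, len_nonneg K β, mul_nonneg (sub_nonneg.2 h2) (len_nonneg K α),
    mul_le_mul_of_nonneg_right h1 (len_nonneg K β)]

lemma integrable_sq_len_sub {A : Set (ℝ × ℝ)} (hA : IsCompact A) (t : ℝ) :
    Integrable fun s => (len A s - len A (s + t)) ^ 2 := by
  have h : (fun s => (len A s - len A (s + t)) ^ 2) = fun s => (len A (s + 0) * len A (s + 0)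
      + len A (s + t) * len A (s + t)) - 2 * (len A (s + 0) * len A (s + t)) := by
    ext s
    rw [add_zero]
    ring
  rw [h]
  exact ((integrable_len_mul hA _ _).add (integrable_len_mul hA _ _)).sub
    ((integrable_len_mul hA _ _).const_mul 2)

lemma le_integral_sq_len_sub {K : Set (ℝ × ℝ)} (hKc : IsCompact K) (hK : Convex ℝ K)
    {α β c d t : ℝ} (hα : ∀ x ∈ K, α ≤ x.2) (hβ : ∀ x ∈ K, x.2 ≤ β) (hc : (c, β) ∈ K)
    (hd : (d, α) ∈ K) (ht : 0 < t) (htw : t < β - α) :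
    t * ((1 - t / (β - α)) ^ 2 * (len K β ^ 2 + len K α ^ 2))
      ≤ ∫ s, (len K s - len K (s + t)) ^ 2 := by
  set μ : ℝ := 1 - t / (β - α) with hμ
  have hw : 0 < β - α := by linarith
  have hμ0 : 0 ≤ μ := sub_nonneg.2 ((div_le_one hw).2 htw.le)
  have hpt : ∀ s, (Ico (α - t) α).indicator (fun _ => (μ * len K α) ^ 2) s
      + (Ioc (β - t) β).indicator (fun _ => (μ * len K β) ^ 2) s
      ≤ (len K s - len K (s + t)) ^ 2 := by
    intro s
    by_cases h1 : s ∈ Ico (α - t) α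
    · rw [indicator_of_mem h1, indicator_of_notMem fun h2 => by linarith [h1.2, h2.1], add_zero,
        len_eq_zero (s := s) fun x hx hxs => by linarith [hα x hx, h1.2], zero_sub, neg_sq]
      exact pow_le_pow_left₀ (mul_nonneg hμ0 (len_nonneg _ _))
        (le_len_near_bot hKc hK hc hd htw ⟨by linarith [h1.1], by linarith [h1.2]⟩) 2
    · rw [indicator_of_notMem h1, zero_add]
      by_cases h2 : s ∈ Ioc (β - t) β
      · rw [indicator_of_mem h2,
          len_eq_zero (s := s + t) fun x hx hxs => by linarith [hβ x hx, h2.1], sub_zero]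
        exact pow_le_pow_left₀ (mul_nonneg hμ0 (len_nonneg _ _))
          (le_len_near_top hKc hK hc hd htw ⟨h2.1.le, h2.2⟩) 2
      · rw [indicator_of_notMem h2]
        exact sq_nonneg _
  have hi1 : Integrable ((Ico (α - t) α).indicator fun _ => (μ * len K α) ^ 2) :=
    (integrable_indicator_iff measurableSet_Ico).2 (integrableOn_const measure_Ico_lt_top.ne)
  have hi2 : Integrable ((Ioc (β - t) β).indicator fun _ => (μ * len K β) ^ 2) :=
    (integrable_indicator_iff measurableSet_Ioc).2 (integrableOn_const measure_Ioc_lt_top.ne)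
  have := integral_mono (hi1.add hi2) (integrable_sq_len_sub hKc t) hpt
  rw [integral_add' hi1 hi2, integral_indicator_const _ measurableSet_Ico,
    integral_indicator_const _ measurableSet_Ioc, Real.volume_real_Ico_of_le (by linarith),
    Real.volume_real_Ioc_of_le (by linarith), smul_eq_mul, smul_eq_mul, sub_sub_cancel,
    sub_sub_cancel] at this
  linarith [mul_pow μ (len K α) 2, mul_pow μ (len K β) 2]

lemma le_integral_len_mul {K : Set (ℝ × ℝ)} (hKc : IsCompact K) (hK : Convex ℝ K)
    {α β c d t : ℝ} (hc : (c, β) ∈ K) (hd : (d, α) ∈ K) (ht : 0 < t) (htw : t < β - α) :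
    t * ((1 - t / (β - α)) ^ 2 * (len K α * len K β))
      ≤ ∫ s, len K s * len K (s + (β - α - t)) := by
  set μ : ℝ := 1 - t / (β - α) with hμ
  have hw : 0 < β - α := by linarith
  have hμ0 : 0 ≤ μ := sub_nonneg.2 ((div_le_one hw).2 htw.le)
  have hpt : ∀ s, (Icc α (α + t)).indicator (fun _ => (μ * len K α) * (μ * len K β)) s
      ≤ len K s * len K (s + (β - α - t)) := by
    intro s
    by_cases h1 : s ∈ Icc α (α + t)
    · rw [indicator_of_mem h1]
      exact mul_le_mul (le_len_near_bot hKc hK hc hd htw h1)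
        (le_len_near_top hKc hK hc hd htw ⟨by linarith [h1.1], by linarith [h1.2]⟩)
        (mul_nonneg hμ0 (len_nonneg _ _)) (len_nonneg _ _)
    · rw [indicator_of_notMem h1]
      exact mul_nonneg (len_nonneg _ _) (len_nonneg _ _)
  have hi1 : Integrable ((Icc α (α + t)).indicator fun _ => (μ * len K α) * (μ * len K β)) :=
    (integrable_indicator_iff measurableSet_Icc).2 (integrableOn_const measure_Icc_lt_top.ne)
  have hi2 : Integrable fun s => len K s * len K (s + (β - α - t)) := by
    simpa using integrable_len_mul hKc 0 (β - α - t)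
  have := integral_mono hi1 hi2 hpt
  rw [integral_indicator_const _ measurableSet_Icc, Real.volume_real_Icc_of_le (by linarith),
    smul_eq_mul, add_sub_cancel_left] at this
  linarith

lemma sq_add_len_le {A K : Set (ℝ × ℝ)} (hA : IsCompact A) {m : ℕ}
    {p q : Fin m → ℝ × ℝ} (hfr : frontier A = ⋃ i, segment ℝ (p i) (q i)) (hKc : IsCompact K)
    (hK : Convex ℝ K) (hcov : ∀ x, cov A x = cov K x) {α β α' β' c d : ℝ}
    (hα : ∀ x ∈ A, α ≤ x.2) (hβ : ∀ x ∈ A, x.2 ≤ β) (hα' : ∀ x ∈ K, α' ≤ x.2)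
    (hβ' : ∀ x ∈ K, x.2 ≤ β') (hc : (c, β') ∈ K) (hd : (d, α') ∈ K) (hw : 0 < β' - α')
    (hww : β - α = β' - α') {T : Finset ℝ} (hT : ∀ i, (p i).2 ∈ T) :
    (len K β' + len K α') ^ 2 ≤ ∑ s ∈ T, len (horiz p q) s ^ 2
      + 2 * (len (horiz p q) α * len (horiz p q) β) := by
  obtain ⟨C, hC⟩ := integral_sq_len_sub_le hA hfr hT
  obtain ⟨C', hC'⟩ := integral_len_mul_le hA hfr hT hα hβ
  have hle : ∀ᶠ t in 𝓝[>] (0 : ℝ), (1 - t / (β' - α')) ^ 2 * (len K β' + len K α') ^ 2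
      ≤ ∑ s ∈ T, len (horiz p q) s ^ 2 + C * t
        + 2 * ((C' * t + len (horiz p q) α) * (C' * t + len (horiz p q) β)) := by
    filter_upwards [hC, hC', Ioo_mem_nhdsGT hw] with t h1 h2 ht
    have h3 := le_integral_sq_len_sub hKc hK hα' hβ' hc hd ht.1 ht.2
    have h4 := le_integral_len_mul hKc hK hc hd ht.1 ht.2
    rw [integral_sq_len_sub hA] at h1
    rw [integral_sq_len_sub hKc] at h3
    rw [hww, ← integral_cov_fst hA] at h2
    rw [← integral_cov_fst hKc] at h4
    simp only [hcov] at h1 h2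
    refine le_of_mul_le_mul_left ?_ ht.1
    linarith
  have hcont : ∀ f : ℝ → ℝ, Continuous f → Tendsto f (𝓝[>] 0) (𝓝 (f 0)) := fun f hf =>
    (hf.tendsto 0).mono_left nhdsWithin_le_nhds
  have := le_of_tendsto_of_tendsto
    (hcont (fun t => (1 - t / (β' - α')) ^ 2 * (len K β' + len K α') ^ 2) (by fun_prop))
    (hcont (fun t => ∑ s ∈ T, len (horiz p q) s ^ 2 + C * t
        + 2 * ((C' * t + len (horiz p q) α) * (C' * t + len (horiz p q) β))) (by fun_prop)) hle
  simpa using this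

lemma exists_lt_gt_of_mem_interior {A : Set (ℝ × ℝ)} {x : ℝ × ℝ} (hx : x ∈ interior A) :
    ∃ ε > 0, x + (0, ε) ∈ A ∧ x + (0, -ε) ∈ A := by
  have hnhds := mem_interior_iff_mem_nhds.1 hx
  have ht : ∀ u : ℝ, Tendsto (fun ε : ℝ => x + (0, u * ε)) (𝓝[>] 0) (𝓝 x) := by
    intro u
    have : Continuous fun ε : ℝ => x + (0, u * ε) := by fun_prop
    have h := (this.tendsto 0).mono_left (nhdsWithin_le_nhds (s := Ioi 0))
    rwa [mul_zero, ← Prod.zero_eq_mk, add_zero] at h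
  obtain ⟨ε, ⟨h1, h2⟩, hε⟩ := ((((ht 1).eventually hnhds).and ((ht (-1)).eventually hnhds)).and
    self_mem_nhdsWithin).exists
  rw [one_mul] at h1
  rw [neg_one_mul] at h2
  exact ⟨ε, hε, h1, h2⟩

lemma len_horiz_pos {m : ℕ} {p q : Fin m → ℝ × ℝ} (hpq : ∀ i, p i ≠ q i) {i : Fin m}
    (hi : (p i).2 = (q i).2) : 0 < len (horiz p q) (p i).2 := by
  have hne : (p i).1 ≠ (q i).1 := fun h => hpq i (Prod.ext h hi)
  have hsub : segment ℝ (p i).1 (q i).1 ⊆ slice (horiz p q) (p i).2 := by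
    rintro a ⟨u, v, hu, hv, huv, rfl⟩
    refine ⟨i, hi, u, v, hu, hv, huv, ?_⟩
    ext
    · simp
    · simp only [Prod.snd_add, Prod.smul_snd, smul_eq_mul, ← hi, ← add_mul, huv, one_mul]
  rw [segment_eq_uIcc] at hsub
  refine lt_of_lt_of_le ?_
    (measureReal_mono hsub (isCompact_slice (isCompact_horiz p q) _).measure_lt_top.ne)
  rw [Real.volume_real_interval]
  exact abs_pos.2 (sub_ne_zero.2 hne.symm)

lemma finite_slice_of_len_eq_zero {A : Set (ℝ × ℝ)} {m : ℕ} {p q : Fin m → ℝ × ℝ}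
    (hpq : ∀ i, p i ≠ q i) (hfr : frontier A = ⋃ i, segment ℝ (p i) (q i)) {s : ℝ}
    (hs : ∀ a, (a, s) ∈ A → (a, s) ∈ frontier A) (hlen : len (horiz p q) s = 0) :
    (slice A s).Finite := by
  refine (finite_range fun i =>
    (p i).1 + (s - (p i).2) * ((q i - p i).1 / (q i - p i).2)).subset fun a ha => ?_
  obtain ⟨i, hi⟩ := mem_iUnion.1 (hfr ▸ hs a ha)
  obtain ⟨θ, -, -, h1, h2⟩ := exists_param_of_mem_segment hi
  simp only at h1 h2
  refine ⟨i, ?_⟩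
  by_cases hd : (q i - p i).2 = 0
  · rw [hd, mul_zero, add_zero] at h2
    rw [Prod.snd_sub] at hd
    have := len_horiz_pos hpq (i := i) (by linarith)
    rw [← h2, hlen] at this
    exact absurd this (lt_irrefl 0)
  · simp only
    rw [h1, h2]
    field_simp
    ring

lemma len_eq_zero_of_len_horiz_eq_zero {A K : Set (ℝ × ℝ)} (hA : IsCompact A) {m : ℕ}
    {p q : Fin m → ℝ × ℝ} (hpq : ∀ i, p i ≠ q i)
    (hfr : frontier A = ⋃ i, segment ℝ (p i) (q i)) (hKc : IsCompact K)
    (hKreg : K = closure (interior K)) (hcov : ∀ x, cov A x = cov K x) {α β α' β' c d : ℝ}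
    (hα : ∀ x ∈ A, α ≤ x.2) (hβ : ∀ x ∈ A, x.2 ≤ β) (hc : (c, β') ∈ K) (hd : (d, α') ∈ K)
    (hww : β - α = β' - α') (hα0 : len (horiz p q) α = 0) (hβ0 : len (horiz p q) β = 0) :
    len K β' = 0 ∧ len K α' = 0 := by
  have hfinα : (slice A α).Finite := by
    refine finite_slice_of_len_eq_zero hpq hfr (fun a ha => ⟨subset_closure ha, fun hi => ?_⟩) hα0
    obtain ⟨ε, hε, -, h⟩ := exists_lt_gt_of_mem_interior hi
    have := hα _ h
    simp only [Prod.snd_add] at this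
    linarith
  have hfinβ : (slice A β).Finite := by
    refine finite_slice_of_len_eq_zero hpq hfr (fun a ha => ⟨subset_closure ha, fun hi => ?_⟩) hβ0
    obtain ⟨ε, hε, h, -⟩ := exists_lt_gt_of_mem_interior hi
    have := hβ _ h
    simp only [Prod.snd_add] at this
    linarith
  have hfin : (image2 (fun x y => y - x) (slice A α) (slice A β)).Finite := hfinα.image2 _ hfinβ
  have hmem : ∀ u v : ℝ, (u, α') ∈ K → (v, β') ∈ K →
      v - u ∈ image2 (fun x y => y - x) (slice A α) (slice A β) := by
    intro u v hu hv
    obtain ⟨z, hz, hz'⟩ := exists_mem_add_mem_of_cov_eq (x := (v - u, β' - α')) hKc hKreg hA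
      (fun x => (hcov x).symm) hu (by simpa using hv)
    have h1 := hα z hz
    have h2 := hβ _ hz'
    simp only [Prod.snd_add] at h2
    have hz2 : z.2 = α := by linarith
    refine ⟨z.1, ?_, z.1 + (v - u), ?_, by ring⟩
    · change (z.1, α) ∈ A
      rwa [← hz2]
    · change (z.1 + (v - u), β) ∈ A
      convert hz' using 1
      ext
      · simp
      · simp only [Prod.snd_add]
        linarith
  constructor
  · have : (slice K β').Finite := by
      refine (hfin.image fun x => d + x).subset fun v hv => ⟨_, hmem d v hd hv, ?_⟩
      ring
    rw [len, measureReal_def, this.measure_zero]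
    rfl
  · have : (slice K α').Finite := by
      refine (hfin.image fun x => c - x).subset fun u hu => ⟨_, hmem u c hu hc, ?_⟩
      ring
    rw [len, measureReal_def, this.measure_zero]
    rfl

lemma add_mul_eq_zero_of_sum_sq {T : Finset ℝ} {f : ℝ → ℝ} (hf : ∀ s, 0 ≤ f s) {α β γ S : ℝ}
    (hα : α ∈ T) (hβ : β ∈ T) (hγ : γ ∈ T) (hαβ : α ≠ β) (hγα : γ ≠ α) (hγβ : γ ≠ β)
    (h1 : ∑ s ∈ T, f s ≤ S) (h2 : S ^ 2 ≤ ∑ s ∈ T, f s ^ 2 + 2 * (f α * f β)) :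
    (f α + f β) * f γ ≤ 0 := by
  have hβ' : β ∈ T.erase α := Finset.mem_erase.2 ⟨hαβ.symm, hβ⟩
  have hγ' : γ ∈ (T.erase α).erase β :=
    Finset.mem_erase.2 ⟨hγβ, Finset.mem_erase.2 ⟨hγα, hγ⟩⟩
  have e : ∀ g : ℝ → ℝ, ∑ s ∈ T, g s
      = g α + (g β + (g γ + ∑ s ∈ ((T.erase α).erase β).erase γ, g s)) := fun g => by
    rw [Finset.add_sum_erase _ _ hγ', Finset.add_sum_erase _ _ hβ', Finset.add_sum_erase _ _ hα]
  have h3 : ∑ s ∈ ((T.erase α).erase β).erase γ, f s ^ 2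
      ≤ (∑ s ∈ ((T.erase α).erase β).erase γ, f s) ^ 2 :=
    Finset.sum_sq_le_sq_sum_of_nonneg fun s _ => hf s
  have h4 : 0 ≤ ∑ s ∈ ((T.erase α).erase β).erase γ, f s := Finset.sum_nonneg fun s _ => hf s
  have h5 : 0 ≤ ∑ s ∈ T, f s := Finset.sum_nonneg fun s _ => hf s
  have h6 := pow_le_pow_left₀ h5 h1 2
  rw [e f] at h6
  rw [e fun s => f s ^ 2] at h2
  have := hf α
  have := hf β
  have := hf γ
  nlinarith [mul_nonneg (hf α) h4, mul_nonneg (hf β) h4, mul_nonneg (hf γ) h4]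

theorem le_or_ge_of_horizontal {A K : Set (ℝ × ℝ)} (hA : IsCompact A)
    (hreg : A = closure (interior A)) {m : ℕ} {p q : Fin m → ℝ × ℝ} (hpq : ∀ i, p i ≠ q i)
    (hfr : frontier A = ⋃ i, segment ℝ (p i) (q i)) (hKc : IsCompact K) (hK : Convex ℝ K)
    (hKint : (interior K).Nonempty) (hcov : ∀ x, cov A x = cov K x) {i : Fin m}
    (hi : (p i).2 = (q i).2) : (∀ x ∈ A, x.2 ≤ (p i).2) ∨ ∀ x ∈ A, (p i).2 ≤ x.2 := by
  have hpA : p i ∈ A := by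
    have : p i ∈ frontier A := hfr ▸ mem_iUnion.2 ⟨i, left_mem_segment ℝ _ _⟩
    exact hA.isClosed.frontier_subset this
  have hKreg : K = closure (interior K) := by
    rw [hK.closure_interior_eq_closure_of_nonempty_interior hKint, hKc.isClosed.closure_eq]
  obtain ⟨a₀, ha₀, hα⟩ := hA.exists_isMinOn ⟨_, hpA⟩ continuous_snd.continuousOn
  obtain ⟨a₁, ha₁, hβ⟩ := hA.exists_isMaxOn ⟨_, hpA⟩ continuous_snd.continuousOn
  obtain ⟨k₀, hk₀, hα'⟩ := hKc.exists_isMinOn (hKint.mono interior_subset)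
    continuous_snd.continuousOn
  obtain ⟨k₁, hk₁, hβ'⟩ := hKc.exists_isMaxOn (hKint.mono interior_subset)
    continuous_snd.continuousOn
  replace hα : ∀ x ∈ A, a₀.2 ≤ x.2 := fun x hx => hα hx
  replace hβ : ∀ x ∈ A, x.2 ≤ a₁.2 := fun x hx => hβ hx
  replace hα' : ∀ x ∈ K, k₀.2 ≤ x.2 := fun x hx => hα' hx
  replace hβ' : ∀ x ∈ K, x.2 ≤ k₁.2 := fun x hx => hβ' hx
  have hww : a₁.2 - a₀.2 = k₁.2 - k₀.2 := by
    refine le_antisymm ?_ ?_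
    · obtain ⟨z, hz, hz'⟩ := exists_mem_add_mem_of_cov_eq (x := a₁ - a₀) hA hreg hKc hcov ha₀
        (by simpa using ha₁)
      have h1 := hα' z hz
      have h2 := hβ' _ hz'
      simp only [Prod.snd_add, Prod.snd_sub] at h2
      linarith
    · obtain ⟨z, hz, hz'⟩ := exists_mem_add_mem_of_cov_eq (x := k₁ - k₀) hKc hKreg hA
        (fun x => (hcov x).symm) hk₀ (by simpa using hk₁)
      have h1 := hα z hz
      have h2 := hβ _ hz'
      simp only [Prod.snd_add, Prod.snd_sub] at h2
      linarith
  have hw : 0 < k₁.2 - k₀.2 := by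
    obtain ⟨x, hx⟩ := hKint
    obtain ⟨ε, hε, h1, h2⟩ := exists_lt_gt_of_mem_interior hx
    have h3 := hβ' _ h1
    have h4 := hα' _ h2
    simp only [Prod.snd_add] at h3 h4
    linarith
  by_contra! hcon
  obtain ⟨⟨x, hx, hx'⟩, y, hy, hy'⟩ := hcon
  set T : Finset ℝ := insert a₀.2 (insert a₁.2 (Finset.univ.image fun j => (p j).2)) with hTdef
  have hT : ∀ j, (p j).2 ∈ T := fun j => by simp [hTdef]
  have hsum := sum_len_le hA hreg hpq hfr hKc hK hcov (c := k₁.1) (d := k₀.1) hβ' hk₁ hα' hk₀ T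
  have hsq := sq_add_len_le hA hfr hKc hK hcov (c := k₁.1) (d := k₀.1) hα hβ hα' hβ' hk₁ hk₀ hw
    hww hT
  have hpos := len_horiz_pos hpq hi
  have hprod := add_mul_eq_zero_of_sum_sq (len_nonneg (horiz p q)) (α := a₀.2) (β := a₁.2)
    (by simp [hTdef]) (by simp [hTdef]) (hT i) (by intro h; linarith)
    (by intro h; linarith [hα y hy]) (by intro h; linarith [hβ x hx]) hsum hsq
  have h0 := len_nonneg (horiz p q) a₀.2
  have h1 := len_nonneg (horiz p q) a₁.2
  have h01 : len (horiz p q) a₀.2 + len (horiz p q) a₁.2 ≤ 0 :=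
    nonpos_of_mul_nonpos_left hprod hpos
  obtain ⟨hb, ha⟩ := len_eq_zero_of_len_horiz_eq_zero hA hpq hfr hKc hKreg hcov (c := k₁.1)
    (d := k₀.1) hα hβ hk₁ hk₀ hww (by linarith) (by linarith)
  rw [hb, ha] at hsum
  have := Finset.single_le_sum (f := len (horiz p q)) (fun s _ => len_nonneg _ s) (hT i)
  linarith

lemma exists_equiv_snd_eq_zero {d : EuclideanSpace ℝ (Fin 2)} (hd : d ≠ 0) :
    ∃ Φ : EuclideanSpace ℝ (Fin 2) ≃L[ℝ] ℝ × ℝ, (Φ d).2 = 0 := by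
  let L : EuclideanSpace ℝ (Fin 2) →ₗ[ℝ] ℝ × ℝ :=
    { toFun := fun x => (d 0 * x 0 + d 1 * x 1, d 0 * x 1 - d 1 * x 0)
      map_add' := fun x y => by
        ext
        · simp only [PiLp.add_apply, Prod.fst_add]
          ring
        · simp only [PiLp.add_apply, Prod.snd_add]
          ring
      map_smul' := fun a x => by
        ext
        · simp only [PiLp.smul_apply, smul_eq_mul, RingHom.id_apply, Prod.smul_fst]
          ring
        · simp only [PiLp.smul_apply, smul_eq_mul, RingHom.id_apply, Prod.smul_snd]
          ring }
  have hpos : d 0 ^ 2 + d 1 ^ 2 ≠ 0 := by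
    intro h
    refine hd ?_
    ext i
    fin_cases i
    · have : d 0 ^ 2 = 0 := by nlinarith [sq_nonneg (d 0), sq_nonneg (d 1)]
      exact pow_eq_zero_iff two_ne_zero |>.1 this
    · have : d 1 ^ 2 = 0 := by nlinarith [sq_nonneg (d 0), sq_nonneg (d 1)]
      exact pow_eq_zero_iff two_ne_zero |>.1 this
  have hinj : Function.Injective L := by
    rw [← LinearMap.ker_eq_bot, LinearMap.ker_eq_bot']
    intro x hx
    have h1 : d 0 * x 0 + d 1 * x 1 = 0 := congrArg Prod.fst hx
    have h2 : d 0 * x 1 - d 1 * x 0 = 0 := congrArg Prod.snd hx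
    ext i
    fin_cases i
    · refine (mul_eq_zero.1 (?_ : (d 0 ^ 2 + d 1 ^ 2) * x 0 = 0)).resolve_left hpos
      linear_combination d 0 * h1 - d 1 * h2
    · refine (mul_eq_zero.1 (?_ : (d 0 ^ 2 + d 1 ^ 2) * x 1 = 0)).resolve_left hpos
      linear_combination d 1 * h1 + d 0 * h2
  have hrank : Module.finrank ℝ (EuclideanSpace ℝ (Fin 2)) = Module.finrank ℝ (ℝ × ℝ) := by
    simp
  refine ⟨(LinearEquiv.ofInjectiveOfFinrankEq L hinj hrank).toContinuousLinearEquiv, ?_⟩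
  change d 0 * d 1 - d 1 * d 0 = 0
  ring

lemma exists_covariogram_eq_mul_cov (Φ : EuclideanSpace ℝ (Fin 2) ≃L[ℝ] ℝ × ℝ) :
    ∃ c : ℝ, c ≠ 0 ∧ ∀ A x, covariogram A x = c * cov (Φ '' A) (-Φ x) := by
  have : Measure.IsAddHaarMeasure (Measure.map Φ volume) := Φ.isAddHaarMeasure_map volume
  have hsmul := Measure.isAddLeftInvariant_eq_smul (Measure.map Φ volume)
    (volume : Measure (ℝ × ℝ))
  refine ⟨(Measure.addHaarScalarFactor (Measure.map Φ volume) (volume : Measure (ℝ × ℝ)) : ℝ),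
    ?_, fun A x => ?_⟩
  · rw [NNReal.coe_ne_zero]
    exact (Measure.addHaarScalarFactor_pos_of_isAddHaarMeasure _ _).ne'
  · have himage : Φ '' (A ∩ ((· + x) '' A)) = {y | y ∈ Φ '' A ∧ y + -Φ x ∈ Φ '' A} := by
      ext y
      constructor
      · rintro ⟨_, ⟨h1, ⟨z, hz, rfl⟩⟩, rfl⟩
        exact ⟨⟨_, h1, rfl⟩, z, hz, by simp⟩
      · rintro ⟨⟨z, hz, rfl⟩, w, hw, hwz⟩
        refine ⟨z, ⟨hz, w, hw, Φ.injective ?_⟩, rfl⟩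
        rw [map_add, hwz]
        simp
    have hvol : ∀ S : Set (EuclideanSpace ℝ (Fin 2)),
        volume S = Measure.map Φ volume (Φ '' S) := fun S => by
      have := Φ.toHomeomorph.toMeasurableEquiv.map_apply (μ := volume) (Φ '' S)
      change Measure.map Φ volume (Φ '' S) = volume (Φ ⁻¹' (Φ '' S)) at this
      rw [this, Φ.injective.preimage_image]
    have happly := congrArg (fun μ : Measure (ℝ × ℝ) =>
      (μ {y | y ∈ Φ '' A ∧ y + -Φ x ∈ Φ '' A}).toReal) hsmul
    rw [covariogram, hvol, himage]
    refine happly.trans ?_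
    rw [Measure.smul_apply, ENNReal.smul_def, smul_eq_mul, ENNReal.toReal_mul]
    rfl

lemma frontier_inter_interior_convexHull {A K : Set (EuclideanSpace ℝ (Fin 2))}
    (hA : IsCompact A) (hreg : A = closure (interior A)) {m : ℕ}
    {p q : Fin m → EuclideanSpace ℝ (Fin 2)} (hpq : ∀ i, p i ≠ q i)
    (hfr : frontier A = ⋃ i, segment ℝ (p i) (q i)) (hKc : IsCompact K) (hK : Convex ℝ K)
    (hKint : (interior K).Nonempty) (hcov : covariogram A = covariogram K)
    {z : EuclideanSpace ℝ (Fin 2)} (hz : z ∈ frontier A) : z ∉ interior (convexHull ℝ A) := by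
  intro hzi
  obtain ⟨i, hi⟩ := mem_iUnion.1 (hfr ▸ hz)
  obtain ⟨Φ, hΦ⟩ := exists_equiv_snd_eq_zero (sub_ne_zero.2 (hpq i).symm)
  obtain ⟨c, hc, hcc⟩ := exists_covariogram_eq_mul_cov Φ
  have hseg : ∀ j, Φ '' segment ℝ (p j) (q j) = segment ℝ (Φ (p j)) (Φ (q j)) := fun j =>
    image_segment ℝ Φ.toLinearEquiv.toLinearMap.toAffineMap _ _
  have hfr' : frontier (Φ '' A) = ⋃ j, segment ℝ (Φ (p j)) (Φ (q j)) := by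
    have h : Φ '' frontier A = frontier (Φ '' A) := Φ.toHomeomorph.image_frontier A
    rw [← h, hfr, image_iUnion, iUnion_congr hseg]
  have hfi : ∀ B : Set (EuclideanSpace ℝ (Fin 2)), interior (Φ '' B) = Φ '' interior B :=
    fun B => (Φ.toHomeomorph.image_interior B).symm
  have hreg' : Φ '' A = closure (interior (Φ '' A)) := by
    rw [hfi]
    conv_lhs => rw [hreg]
    exact Φ.toHomeomorph.image_closure _
  have hcov' : ∀ x, cov (Φ '' A) x = cov (Φ '' K) x := fun x => by
    have h := congrFun hcov (-Φ.symm x)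
    rw [hcc, hcc] at h
    simpa using mul_left_cancel₀ hc h
  have hpqi : (Φ (p i)).2 = (Φ (q i)).2 := by
    rw [map_sub, Prod.snd_sub] at hΦ
    linarith
  have hmain := le_or_ge_of_horizontal (hA.image Φ.continuous) hreg'
    (fun j h => hpq j (Φ.injective h)) hfr' (hKc.image Φ.continuous)
    (hK.linear_image Φ.toLinearEquiv.toLinearMap) (by rw [hfi]; exact hKint.image Φ) hcov' hpqi
  have hz2 : (Φ z).2 = (Φ (p i)).2 := by
    obtain ⟨θ, -, -, -, h⟩ := exists_param_of_mem_segment (hseg i ▸ mem_image_of_mem Φ hi)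
    rw [h, Prod.snd_sub, hpqi]
    ring
  have hzi' : Φ z ∈ interior (Φ '' convexHull ℝ A) := by
    rw [hfi]
    exact mem_image_of_mem Φ hzi
  obtain ⟨ε, hε, ⟨y, hy, hy'⟩, w, hw, hw'⟩ := exists_lt_gt_of_mem_interior hzi'
  have hy2 : (Φ y).2 = (Φ z).2 + ε := by rw [hy', Prod.snd_add]
  have hw2 : (Φ w).2 = (Φ z).2 - ε := by rw [hw', Prod.snd_add, sub_eq_add_neg]
  let f : EuclideanSpace ℝ (Fin 2) →ₗ[ℝ] ℝ := LinearMap.snd ℝ ℝ ℝ ∘ₗ Φ.toLinearEquiv.toLinearMap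
  rcases hmain with h | h
  · have hsub : convexHull ℝ A ⊆ {x | f x ≤ (Φ (p i)).2} :=
      convexHull_min (fun x hx => h _ (mem_image_of_mem Φ hx)) (convex_halfSpace_le f.isLinear _)
    have : (Φ y).2 ≤ (Φ (p i)).2 := hsub hy
    linarith
  · have hsub : convexHull ℝ A ⊆ {x | (Φ (p i)).2 ≤ f x} :=
      convexHull_min (fun x hx => h _ (mem_image_of_mem Φ hx)) (convex_halfSpace_ge f.isLinear _)
    have : (Φ (p i)).2 ≤ (Φ w).2 := hsub hw
    linarith

end PlanarCovariogram

/-- If `A ⊆ ℝ²` is a regular compact set whose boundary is a finite union of closed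
nondegenerate line segments, and `g_A = g_K` for some convex body `K`, then `A` is convex. -/
theorem covariogram_convex_of_polygonal_boundary (A : Set (EuclideanSpace ℝ (Fin 2)))
    (hA : IsCompact A) (hreg : A = closure (interior A))
    (hbd : ∃ (m : ℕ) (p q : Fin m → EuclideanSpace ℝ (Fin 2)),
      (∀ i, p i ≠ q i) ∧ frontier A = ⋃ i, segment ℝ (p i) (q i))
    (hK : ∃ K : Set (EuclideanSpace ℝ (Fin 2)), IsCompact K ∧ Convex ℝ K ∧
      (interior K).Nonempty ∧ covariogram A = covariogram K) :
    Convex ℝ A := by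
  obtain ⟨m, p, q, hpq, hfr⟩ := hbd
  obtain ⟨K, hKc, hKconv, hKint, hcov⟩ := hK
  rcases eq_empty_or_nonempty (interior A) with hempty | ⟨x, hx⟩
  · rw [hreg, hempty, closure_empty]
    exact convex_empty
  have hxi : x ∈ interior (convexHull ℝ A) := interior_mono (subset_convexHull ℝ A) hx
  have hconv := (convex_convexHull ℝ A).interior
  have hsub : interior (convexHull ℝ A) ⊆ A := by
    intro y hy
    by_contra hyA
    obtain ⟨z, hz, hzf⟩ :=
      PlanarCovariogram.exists_mem_frontier_of_isPreconnected hconv.isPreconnected hxi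
      (interior_subset hx) hy hyA
    exact PlanarCovariogram.frontier_inter_interior_convexHull hA hreg hpq hfr hKc hKconv hKint
      hcov hzf hz
  have hhull : convexHull ℝ A ⊆ A := by
    refine subset_closure.trans ?_
    rw [← (convex_convexHull ℝ A).closure_interior_eq_closure_of_nonempty_interior ⟨x, hxi⟩]
    exact closure_minimal hsub hA.isClosed
  rw [← hhull.antisymm (subset_convexHull ℝ A)]
  exact convex_convexHull ℝ A
end

section
/- Let D be a bounded Lebesgue-measurable subset of ℝ and r a positive integer. Suppose there exist 2r points a₁ < b₁ < a₂ < b₂ < ... < a_r < b_r, all lying in ℝ \ D, such that λ₁(D ∩ [a_i, b_i]) > 0 for i = 1, ..., r and λ₁(D ∩ [b_i, a_{i+1}]) = 0 for i = 1, ..., r − 1. Then liminf_{h → 0⁺} λ₁(D \ (D + h)) / h ≥ r. -/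
open MeasureTheory Topology Filter Set
open scoped ENNReal

/-- Additivity of the measure of a set over adjacent half-open intervals. -/
theorem volume_inter_Ioc_add (E : Set ℝ) {x y z : ℝ} (hxy : x ≤ y) (hyz : y ≤ z) :
    volume (E ∩ Ioc x y) + volume (E ∩ Ioc y z) = volume (E ∩ Ioc x z) := by
  rw [← measure_inter_add_sdiff (E ∩ Ioc x z) (measurableSet_Iic (a := y))]
  congr 2
  · ext w
    simp only [mem_inter_iff, mem_Ioc, mem_Iic]
    grind
  · ext w
    simp only [mem_inter_iff, mem_Ioc, Set.mem_sdiff, mem_Iic]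
    grind

/-- Points of `D` in an interval either come from the preceding interval by translation
or belong to `D \ (D + h)`. -/
theorem volume_inter_Ioc_le_prev (D : Set ℝ) (h t : ℝ) :
    volume (D ∩ Ioc t (t + h)) ≤
      volume (D ∩ Ioc (t - h) t) + volume ((D \ ((· + h) '' D)) ∩ Ioc t (t + h)) := by
  have hsub : D ∩ Ioc t (t + h) ⊆
      ((· + h) '' (D ∩ Ioc (t - h) t)) ∪ ((D \ ((· + h) '' D)) ∩ Ioc t (t + h)) := by
    rintro x ⟨hx, hx1, hx2⟩
    by_cases hxD : x ∈ (· + h) '' D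
    · left
      obtain ⟨y, hy, rfl⟩ := hxD
      exact ⟨y, ⟨hy, by dsimp only at hx1; linarith, by dsimp only at hx2; linarith⟩, rfl⟩
    · exact Or.inr ⟨⟨hx, hxD⟩, hx1, hx2⟩
  refine (measure_mono hsub).trans ((measure_union_le _ _).trans_eq ?_)
  rw [image_add_right, measure_preimage_add_right]

theorem volume_inter_Ioc_le_iterate (D : Set ℝ) {h : ℝ} (hh : 0 ≤ h) (t : ℝ) (n : ℕ) :
    volume (D ∩ Ioc t (t + h)) ≤
      volume (D ∩ Ioc (t - n * h) (t - n * h + h)) +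
        volume ((D \ ((· + h) '' D)) ∩ Ioc (t - n * h + h) (t + h)) := by
  induction n with
  | zero => simp
  | succ n ih =>
    refine ih.trans ?_
    have hn : 0 ≤ (n : ℝ) * h := by positivity
    have e : t - ((n + 1 : ℕ) : ℝ) * h = t - n * h - h := by push_cast; ring
    rw [e, sub_add_cancel, ← volume_inter_Ioc_add _ (show t - n * h ≤ t - n * h + h by linarith)
      (show t - n * h + h ≤ t + h by linarith), ← add_assoc]
    gcongr
    exact volume_inter_Ioc_le_prev D h _

/-- If `D` is null on `[c, a]` with `2 * h ≤ a - c`, the mass of `D` in an interval of length `h`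
to the right of `a` is at most that of `D \ (D + h)` between `c` and the end of the interval. -/
theorem volume_inter_Ioc_le_sdiff (D : Set ℝ) {c a h t b : ℝ} (hh : 0 < h)
    (hnull : volume (D ∩ Icc c a) = 0) (hca : 2 * h ≤ a - c) (hat : a ≤ t) (htb : t + h ≤ b) :
    volume (D ∩ Ioc t (t + h)) ≤ volume ((D \ ((· + h) '' D)) ∩ Ioc c b) := by
  set n := ⌈(t - (a - h)) / h⌉₊ with hn
  have h1 : (t - (a - h)) / h ≤ n := Nat.le_ceil _
  have h2 : (n : ℝ) < (t - (a - h)) / h + 1 :=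
    Nat.ceil_lt_add_one (div_nonneg (by linarith) hh.le)
  rw [div_le_iff₀ hh] at h1
  have h3 : (n : ℝ) * h < t - (a - h) + h := by
    have := mul_lt_mul_of_pos_right h2 hh
    rwa [add_mul, div_mul_cancel₀ _ hh.ne', one_mul] at this
  refine (volume_inter_Ioc_le_iterate D hh.le t n).trans ?_
  have hz : volume (D ∩ Ioc (t - n * h) (t - n * h + h)) = 0 :=
    measure_mono_null (inter_subset_inter_right _
      fun x hx => mem_Icc.2 ⟨by linarith [hx.1], by linarith [hx.2]⟩) hnull
  rw [hz, zero_add]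
  exact measure_mono (inter_subset_inter_right _ (Ioc_subset_Ioc (by linarith) htb))

theorem exists_tendsto_volume_inter_Ioc_div (D : Set ℝ) {a b : ℝ}
    (hpos : 0 < volume (D ∩ Icc a b)) :
    ∃ x ∈ Ioo a b, Tendsto
      (fun h : ℝ => volume (D ∩ Ioc (x - h / 2) (x - h / 2 + h)) / ENNReal.ofReal h)
      (𝓝[>] 0) (𝓝 1) := by
  have hd := Besicovitch.ae_tendsto_measure_inter_div (volume : Measure ℝ) D
  have hpos' : (volume.restrict D) (Ioo a b) ≠ 0 := by
    rw [Measure.restrict_apply measurableSet_Ioo, inter_comm,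
      measure_congr ((ae_eq_refl D).inter Ioo_ae_eq_Icc)]
    exact hpos.ne'
  obtain ⟨x, hxt, hx⟩ : ∃ x, Tendsto (fun r => volume (D ∩ Metric.closedBall x r) /
      volume (Metric.closedBall x r)) (𝓝[>] 0) (𝓝 1) ∧ x ∈ Ioo a b := by
    by_contra! hcon
    exact hpos' (measure_mono_null (fun x hx hxt => hcon x hxt hx) hd)
  refine ⟨x, hx, ?_⟩
  have hhalf : Tendsto (fun h : ℝ => h / 2) (𝓝[>] 0) (𝓝[>] 0) := by
    refine tendsto_nhdsWithin_iff.2 ⟨?_, ?_⟩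
    · have : Tendsto (fun h : ℝ => h / 2) (𝓝 0) (𝓝 (0 / 2)) :=
        (continuous_id.div_const 2).tendsto 0
      rw [zero_div] at this
      exact this.mono_left nhdsWithin_le_nhds
    · filter_upwards [self_mem_nhdsWithin] with h hh
      exact half_pos (mem_Ioi.1 hh)
  refine (hxt.comp hhalf).congr fun h => ?_
  have e : x - h / 2 + h = x + h / 2 := by ring
  simp only [Function.comp_apply]
  rw [Real.volume_closedBall, Real.closedBall_eq_Icc, e,
    measure_congr ((ae_eq_refl D).inter Ioc_ae_eq_Icc)]
  congr 2
  ring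

theorem sum_volume_inter_Ioc_le (E : Set ℝ) (e : ℕ → ℝ) (r : ℕ)
    (he : ∀ i < r, e i ≤ e (i + 1)) :
    ∑ i ∈ Finset.range r, volume (E ∩ Ioc (e i) (e (i + 1))) ≤ volume E := by
  suffices H : ∑ i ∈ Finset.range r, volume (E ∩ Ioc (e i) (e (i + 1))) ≤
      volume (E ∩ Iic (e r)) from H.trans (measure_mono inter_subset_left)
  induction r with
  | zero => simp
  | succ r ih =>
    have hr := he r r.lt_succ_self
    rw [Finset.sum_range_succ, ← measure_inter_add_sdiff (E ∩ Iic (e (r + 1)))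
      (measurableSet_Iic (a := e r))]
    gcongr
    · refine (ih fun i hi => he i (hi.trans r.lt_succ_self)).trans (measure_mono ?_)
      exact fun x hx => ⟨⟨hx.1, le_trans hx.2 hr⟩, hx.2⟩
    · exact fun x hx => ⟨⟨hx.1, hx.2.2⟩, not_le.2 hx.2.1⟩

/-- If `D ⊆ ℝ` is bounded and measurable, and there are points
`a₁ < b₁ < a₂ < b₂ < ⋯ < a_r < b_r` outside `D` with `λ₁(D ∩ [aᵢ, bᵢ]) > 0` and
`λ₁(D ∩ [bᵢ, aᵢ₊₁]) = 0`, then `liminf_{h → 0⁺} λ₁(D \ (D + h)) / h ≥ r`. -/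
theorem liminf_measure_sdiff_translate_ge (D : Set ℝ)
    (hmeas : MeasurableSet D) (hbd : Bornology.IsBounded D)
    (r : ℕ) (hr : 0 < r) (a b : ℕ → ℝ)
    (hab : ∀ i < r, a i < b i)
    (hba : ∀ i, i + 1 < r → b i < a (i + 1))
    (haD : ∀ i < r, a i ∉ D) (hbD : ∀ i < r, b i ∉ D)
    (hposi : ∀ i < r, 0 < volume (D ∩ Set.Icc (a i) (b i)))
    (hzero : ∀ i, i + 1 < r → volume (D ∩ Set.Icc (b i) (a (i + 1))) = 0) :
    (r : ℝ≥0∞) ≤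
      liminf (fun h : ℝ => volume (D \ ((· + h) '' D)) / ENNReal.ofReal h) (𝓝[>] 0) := by
  obtain ⟨m, hm⟩ := hbd.bddBelow
  choose! x hx hxt using fun i hi => exists_tendsto_volume_inter_Ioc_div D (hposi i hi)
  set d : ℝ := min (m - 1) (a 0) with hd
  have hdm : d ≤ m - 1 := min_le_left _ _
  have hda : d ≤ a 0 := min_le_right _ _
  -- `e i` is the left end of a gap of `D` whose right end is at most `a i`.
  set e : ℕ → ℝ := fun i => Nat.casesOn i (d - 1) b with he
  have hgap : ∀ i < r, ∃ g, e i < g ∧ g ≤ a i ∧ volume (D ∩ Icc (e i) g) = 0 := by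
    rintro (_ | i) hi
    · refine ⟨d, sub_one_lt d, hda, ?_⟩
      have : D ∩ Icc (e 0) d = ∅ := by
        ext y
        simp only [mem_inter_iff, mem_Icc, mem_empty_iff_false, iff_false]
        rintro ⟨hy, -, hyd⟩
        linarith [hm hy]
      rw [this, measure_empty]
    · exact ⟨a (i + 1), hba i hi, le_rfl, hzero i hi⟩
  choose! g heg hga hgz using hgap
  have hmono : ∀ i < r, e i ≤ e (i + 1) := fun i hi =>
    ((heg i hi).le.trans (hga i hi)).trans (hab i hi).le
  have hsum : Tendsto (fun h : ℝ => ∑ i ∈ Finset.range r,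
      volume (D ∩ Ioc (x i - h / 2) (x i - h / 2 + h)) / ENNReal.ofReal h)
      (𝓝[>] 0) (𝓝 (r : ℝ≥0∞)) := by
    have := tendsto_finsetSum (Finset.range r) fun i hi => hxt i (Finset.mem_range.1 hi)
    simpa using this
  rw [← hsum.liminf_eq]
  refine liminf_le_liminf ?_
  have hsmall : ∀ᶠ h : ℝ in 𝓝[>] 0, ∀ i ∈ Finset.range r,
      h < (g i - e i) / 2 ∧ h < x i - a i ∧ h < b i - x i := by
    refine (Filter.eventually_all_finset _).2 fun i hi => ?_
    have hi := Finset.mem_range.1 hi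
    have lt_ev : ∀ {δ : ℝ}, 0 < δ → ∀ᶠ h : ℝ in 𝓝[>] 0, h < δ := fun hδ =>
      nhdsWithin_le_nhds (Iio_mem_nhds hδ)
    exact (lt_ev (half_pos (sub_pos.2 (heg i hi)))).and
      ((lt_ev (sub_pos.2 (hx i hi).1)).and (lt_ev (sub_pos.2 (hx i hi).2)))
  filter_upwards [hsmall, self_mem_nhdsWithin] with h hs hh
  have hh : 0 < h := hh
  simp only [div_eq_mul_inv (b := ENNReal.ofReal h)]
  rw [← Finset.sum_mul]
  gcongr
  refine le_trans (Finset.sum_le_sum fun i hi => ?_)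
    (sum_volume_inter_Ioc_le (D \ ((· + h) '' D)) e r hmono)
  obtain ⟨h1, h2, h3⟩ := hs i hi
  have hi := Finset.mem_range.1 hi
  exact volume_inter_Ioc_le_sdiff D hh (hgz i hi) (by linarith)
    (by linarith [hga i hi]) (show _ ≤ b i by linarith)
end
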